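/- Let (Ω, 𝒜, μ) be a measure space, p ∈ [1,∞), T a positive C₀-semigroup on L_p(μ) with generator A, and V : Ω → [0,∞] locally measurable. Let P := s-lim_{t→0+} T_V(t), a band projection, with range L_p(μ₁) for a decomposition μ = μ₁ + μ₂, μ₁ ⊥ μ₂. Then −V is admissible for the restricted C₀-semigroup T_V|_{L_p(μ₁)}; this relies on the domination T_{V∧m − V∧n}(t) ≤ T(t) for all m ≥ n ≥ 0 and t ≥ 0. -/

import Mathlib

open MeasureTheory Filter Topology ENNReal

noncomputable section

namespace Absorption

variable {E : Type*} [NormedAddCommGroup E] [NormedSpace ℝ E]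

/-- A one-parameter semigroup of bounded operators (for nonnegative times). -/
def IsSemigroup (T : ℝ → E →L[ℝ] E) : Prop :=
  T 0 = ContinuousLinearMap.id ℝ E ∧
    ∀ s t : ℝ, 0 ≤ s → 0 ≤ t → T (s + t) = (T s).comp (T t)

/-- A `C₀`-semigroup: a one-parameter semigroup which is strongly continuous on `[0, ∞)`. -/
def IsC0Semigroup (T : ℝ → E →L[ℝ] E) : Prop :=
  IsSemigroup T ∧ ∀ f : E, ContinuousOn (fun t => T t f) (Set.Ici (0 : ℝ))

/-- `(f, g)` belongs to the graph of the generator of the semigroup `T`. -/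
def InGenerator (T : ℝ → E →L[ℝ] E) (f g : E) : Prop :=
  Tendsto (fun t : ℝ => t⁻¹ • (T t f - f)) (𝓝[>] (0 : ℝ)) (𝓝 g)

variable {Ω : Type*} [MeasurableSpace Ω]

/-- A function into a measurable space is *locally measurable* (w.r.t. `μ`) if on every set of
finite measure it coincides a.e. with a measurable function. -/
def LocallyMeasurable {α : Type*} [MeasurableSpace α] (μ : Measure Ω) (V : Ω → α) : Prop :=
  ∀ B : Set Ω, MeasurableSet B → μ B < ∞ →
    ∃ g : Ω → α, Measurable g ∧ ∀ᵐ ω ∂(μ.restrict B), V ω = g ω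

/-- A set is a local `μ`-null set if its intersection with every measurable set of finite
measure is null. -/
def IsLocalNullSet (μ : Measure Ω) (N : Set Ω) : Prop :=
  ∀ B : Set Ω, MeasurableSet B → μ B < ∞ → μ (N ∩ B) = 0

/-- Positivity of a family of operators on `L_p` (for positive times). -/
def IsPositiveSG {p : ℝ≥0∞} {μ : Measure Ω} [Fact (1 ≤ p)]
    (T : ℝ → Lp ℝ p μ →L[ℝ] Lp ℝ p μ) : Prop :=
  ∀ t : ℝ, 0 ≤ t → ∀ f : Lp ℝ p μ, 0 ≤ f → 0 ≤ T t f

/-- A band projection on the Banach lattice `L_p(μ)`: an idempotent operator `P`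
with `0 ≤ P f ≤ f` for all `f ≥ 0`. -/
def IsBandProjection {p : ℝ≥0∞} {μ : Measure Ω} [Fact (1 ≤ p)]
    (P : Lp ℝ p μ →L[ℝ] Lp ℝ p μ) : Prop :=
  P.comp P = P ∧ ∀ f : Lp ℝ p μ, 0 ≤ f → 0 ≤ P f ∧ P f ≤ f

/-- `S = (e^{t(A−W)})_{t ≥ 0}`: `S` is the `C₀`-semigroup whose generator is `A - W`,
where `A` is the generator of `T` and the bounded function `W` acts by multiplication. -/
def IsPerturbedSG (μ : Measure Ω) (p : ℝ≥0∞) [Fact (1 ≤ p)]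
    (T S : ℝ → Lp ℝ p μ →L[ℝ] Lp ℝ p μ) (W : Ω → ℝ) : Prop :=
  IsC0Semigroup S ∧
    ∀ f g : Lp ℝ p μ, InGenerator S f g ↔
      ∃ g₀ : Lp ℝ p μ, InGenerator T f g₀ ∧
        ⇑g =ᵐ[μ] fun ω => g₀ ω - W ω * f ω

/-- Same as `IsPerturbedSG`, for semigroups acting on a subspace `F` of `L_p(μ)`. -/
def IsPerturbedSGSub (μ : Measure Ω) (p : ℝ≥0∞) [Fact (1 ≤ p)] (F : Submodule ℝ (Lp ℝ p μ))
    (T S : ℝ → F →L[ℝ] F) (W : Ω → ℝ) : Prop :=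
  IsC0Semigroup S ∧
    ∀ f g : F, InGenerator S f g ↔
      ∃ g₀ : F, InGenerator T f g₀ ∧
        ⇑(g : Lp ℝ p μ) =ᵐ[μ] fun ω => (g₀ : Lp ℝ p μ) ω - W ω * (f : Lp ℝ p μ) ω

/-- The truncation `V ∧ n` of `V : Ω → [0,∞]`, as a real-valued function. -/
def trunc (V : Ω → ℝ≥0∞) (n : ℕ) : Ω → ℝ := fun ω => (min (V ω) (n : ℝ≥0∞)).toReal

/-- The scalar multiple `ε V` of an absorption rate `V : Ω → [0,∞]`. -/
def smulRate (ε : ℝ) (V : Ω → ℝ≥0∞) : Ω → ℝ≥0∞ := fun ω => ENNReal.ofReal ε * V ω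

/-- The absorption rate `V - V ∧ n` (with value `∞` wherever `V = ∞`). -/
def resid (V : Ω → ℝ≥0∞) (n : ℕ) : Ω → ℝ≥0∞ := fun ω => V ω - min (V ω) (n : ℝ≥0∞)

/-- `TV` is the absorption semigroup `T_V` associated with the rate `V : Ω → [0,∞]`, i.e.
the strong limit `T_V(t) = s-lim_{n→∞} e^{t(A - V∧n)}` (for `t ≥ 0`). -/
def IsAbsorptionSG (μ : Measure Ω) (p : ℝ≥0∞) [Fact (1 ≤ p)]
    (T : ℝ → Lp ℝ p μ →L[ℝ] Lp ℝ p μ) (V : Ω → ℝ≥0∞)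
    (TV : ℝ → Lp ℝ p μ →L[ℝ] Lp ℝ p μ) : Prop :=
  ∃ S : ℕ → ℝ → Lp ℝ p μ →L[ℝ] Lp ℝ p μ,
    (∀ n, IsPerturbedSG μ p T (S n) (trunc V n)) ∧
    ∀ t : ℝ, 0 ≤ t → ∀ f, Tendsto (fun n => S n t f) atTop (𝓝 (TV t f))

/-- `V : Ω → [0,∞]` is `T`-admissible: `V` is locally measurable, the strong limits
`T_V(t) = s-lim_{n→∞} e^{t(A - V∧n)}` exist, and `T_V` is a `C₀`-semigroup. -/
def Admissible (μ : Measure Ω) (p : ℝ≥0∞) [Fact (1 ≤ p)]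
    (T : ℝ → Lp ℝ p μ →L[ℝ] Lp ℝ p μ) (V : Ω → ℝ≥0∞) : Prop :=
  LocallyMeasurable μ V ∧
  ∃ TV, IsAbsorptionSG μ p T V TV ∧ IsC0Semigroup TV

/-- The truncation `(V ∧ n) ∨ (−n)` of an extended-real-valued rate, as a real function. -/
def truncE (V : Ω → EReal) (n : ℕ) : Ω → ℝ :=
  fun ω => (max (min (V ω) (n : EReal)) (-(n : EReal))).toReal

/-- `TV` is the absorption semigroup `T_V` of an extended-real-valued rate `V`:
`T_V(t) = s-lim_{n→∞} e^{t(A - (V∧n)∨(−n))}` (for `t ≥ 0`). -/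
def IsAbsorptionSGE (μ : Measure Ω) (p : ℝ≥0∞) [Fact (1 ≤ p)]
    (T : ℝ → Lp ℝ p μ →L[ℝ] Lp ℝ p μ) (V : Ω → EReal)
    (TV : ℝ → Lp ℝ p μ →L[ℝ] Lp ℝ p μ) : Prop :=
  ∃ S : ℕ → ℝ → Lp ℝ p μ →L[ℝ] Lp ℝ p μ,
    (∀ n, IsPerturbedSG μ p T (S n) (truncE V n)) ∧
    ∀ t : ℝ, 0 ≤ t → ∀ f, Tendsto (fun n => S n t f) atTop (𝓝 (TV t f))

/-- `T`-admissibility for an extended-real-valued absorption rate `V`. -/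
def AdmissibleE (μ : Measure Ω) (p : ℝ≥0∞) [Fact (1 ≤ p)]
    (T : ℝ → Lp ℝ p μ →L[ℝ] Lp ℝ p μ) (V : Ω → EReal) : Prop :=
  LocallyMeasurable μ V ∧
  ∃ TV, IsAbsorptionSGE μ p T V TV ∧ IsC0Semigroup TV

end Absorption

open Absorption
namespace AbsAux

/-- Gronwall inequality in integral form. -/
lemma gron {u a : ℝ → ℝ} {C τ : ℝ} (hC : 0 ≤ C) (hu : Continuous u) (ha : Continuous a)
    (ha0 : ∀ t, 0 ≤ a t) (hτ : 0 ≤ τ)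
    (h : ∀ t, 0 ≤ t → t ≤ τ → u t ≤ a t + C * ∫ s in (0:ℝ)..t, u s) :
    u τ ≤ a τ + C * (Real.exp (C * τ) * ∫ s in (0:ℝ)..τ, a s) := by
  have hU : ∀ t, HasDerivAt (fun t => ∫ s in (0:ℝ)..t, u s) (u t) t := fun t =>
    intervalIntegral.integral_hasDerivAt_right (hu.intervalIntegrable _ _)
      hu.stronglyMeasurable.stronglyMeasurableAtFilter hu.continuousAt
  have hA : ∀ t, HasDerivAt (fun t => ∫ s in (0:ℝ)..t, a s) (a t) t := fun t =>
    intervalIntegral.integral_hasDerivAt_right (ha.intervalIntegrable _ _)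
      ha.stronglyMeasurable.stronglyMeasurableAtFilter ha.continuousAt
  have hE : ∀ t, HasDerivAt (fun t => Real.exp (-(C * t))) (Real.exp (-(C * t)) * (-C)) t := by
    intro t
    have : HasDerivAt (fun t : ℝ => -(C * t)) (-C) t := by
      simpa using ((hasDerivAt_id t).const_mul C).fun_neg
    exact this.exp
  have hG : ∀ t, HasDerivAt
      (fun t => (∫ s in (0:ℝ)..t, a s) - Real.exp (-(C * t)) * ∫ s in (0:ℝ)..t, u s)
      (a t - (Real.exp (-(C * t)) * (-C) * (∫ s in (0:ℝ)..t, u s)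
        + Real.exp (-(C * t)) * u t)) t := fun t =>
    (hA t).sub ((hE t).mul (hU t))
  have hmono : MonotoneOn
      (fun t => (∫ s in (0:ℝ)..t, a s) - Real.exp (-(C * t)) * ∫ s in (0:ℝ)..t, u s)
      (Set.Icc 0 τ) := by
    apply monotoneOn_of_deriv_nonneg (convex_Icc 0 τ)
    · exact fun t _ => (hG t).continuousAt.continuousWithinAt
    · exact fun t _ => (hG t).differentiableAt.differentiableWithinAt
    · intro t ht
      rw [interior_Icc] at ht
      rw [(hG t).deriv]
      have h1 := h t ht.1.le ht.2.le
      have h2 : Real.exp (-(C * t)) ≤ 1 := by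
        apply Real.exp_le_one_iff.2
        have := mul_nonneg hC ht.1.le
        linarith
      have h3 := Real.exp_pos (-(C * t))
      have h4 := mul_le_mul_of_nonneg_left h1 h3.le
      have h5 := mul_le_mul_of_nonneg_right h2 (ha0 t)
      nlinarith
  have := hmono ⟨le_rfl, hτ⟩ ⟨hτ, le_rfl⟩ hτ
  simp only [intervalIntegral.integral_same, mul_zero, sub_zero] at this
  have h6 : ∫ s in (0:ℝ)..τ, u s ≤ Real.exp (C * τ) * ∫ s in (0:ℝ)..τ, a s := by
    have h7 : Real.exp (-(C * τ)) * (∫ s in (0:ℝ)..τ, u s) ≤ ∫ s in (0:ℝ)..τ, a s := by linarith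
    have h8 := mul_le_mul_of_nonneg_left h7 (Real.exp_pos (C * τ)).le
    rwa [← mul_assoc, ← Real.exp_add, add_neg_cancel, Real.exp_zero, one_mul] at h8
  have := h τ hτ le_rfl
  have := mul_le_mul_of_nonneg_left h6 hC
  linarith

/-- Gronwall inequality, homogeneous case. -/
lemma gron0 {u : ℝ → ℝ} {C τ : ℝ} (hC : 0 ≤ C) (hu : Continuous u) (hτ : 0 ≤ τ)
    (h : ∀ t, 0 ≤ t → t ≤ τ → u t ≤ C * ∫ s in (0:ℝ)..t, u s) : u τ ≤ 0 := by
  have := gron (a := fun _ => 0) hC hu continuous_const (fun _ => le_rfl) hτ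
    (fun t h0 h1 => by simpa using h t h0 h1)
  simpa using this

section Abstract

variable {E : Type*} [NormedAddCommGroup E] [NormedSpace ℝ E]

/-- `S` is the `C₀`-semigroup generated by `A + B`. -/
def IsPert (T S : ℝ → E →L[ℝ] E) (B : E →L[ℝ] E) : Prop :=
  IsC0Semigroup S ∧ ∀ f g, InGenerator S f g ↔ InGenerator T f (g - B f)

lemma IsPert.symm {T S : ℝ → E →L[ℝ] E} {B : E →L[ℝ] E} (hT : IsC0Semigroup T)
    (h : IsPert T S B) : IsPert S T (-B) := by
  refine ⟨hT, fun f g => ?_⟩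
  rw [h.2]
  simp

lemma IsPert.trans {T S R : ℝ → E →L[ℝ] E} {B C : E →L[ℝ] E}
    (h : IsPert T S B) (h' : IsPert S R C) : IsPert T R (B + C) := by
  refine ⟨h'.1, fun f g => ?_⟩
  rw [h'.2, h.2]
  have : g - C f - B f = g - (B + C) f := by simp; abel
  rw [this]

lemma scale_gen {D : ℝ → E →L[ℝ] E} (c : ℝ) {f g : E} (h : InGenerator D f g) :
    InGenerator (fun t => Real.exp (c * t) • D t) f (g + c • f) := by
  unfold InGenerator at *
  have h1 : Tendsto (fun t : ℝ => Real.exp (c * t)) (𝓝[>] 0) (𝓝 1) := by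
    have : Continuous (fun t : ℝ => Real.exp (c * t)) := by fun_prop
    have := this.tendsto 0
    simp only [mul_zero, Real.exp_zero] at this
    exact this.mono_left nhdsWithin_le_nhds
  have h2 : Tendsto (fun t : ℝ => t⁻¹ * (Real.exp (c * t) - 1)) (𝓝[>] 0) (𝓝 c) := by
    have hd : HasDerivAt (fun t : ℝ => Real.exp (c * t)) c 0 := by
      have : HasDerivAt (fun t : ℝ => c * t) c 0 := by
        simpa using (hasDerivAt_id (0:ℝ)).const_mul c
      simpa using this.exp
    have := hd.tendsto_slope_zero_right
    simpa using this
  have h3 := (h1.smul h).add (h2.smul_const f)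
  rw [one_smul] at h3
  refine h3.congr fun t => ?_
  simp only [_root_.smul_apply]
  module

lemma scale_C0 {D : ℝ → E →L[ℝ] E} (c : ℝ) (h : IsC0Semigroup D) :
    IsC0Semigroup (fun t => Real.exp (c * t) • D t) := by
  obtain ⟨⟨h0, hs⟩, hc⟩ := h
  refine ⟨⟨by simp [h0], fun s t h1 h2 => ?_⟩, fun f => ?_⟩
  · ext f
    simp only [hs s t h1 h2, mul_add, Real.exp_add]
    simp [smul_smul, mul_comm]
  · exact ContinuousOn.smul (by fun_prop) (hc f)

lemma scale_pert {T D : ℝ → E →L[ℝ] E} {B : E →L[ℝ] E} (c : ℝ) (h : IsPert T D B) :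
    IsPert T (fun t => Real.exp (c * t) • D t) (B + c • ContinuousLinearMap.id ℝ E) := by
  refine h.trans ⟨scale_C0 c h.1, fun f g => ⟨fun hg => ?_, fun hg => ?_⟩⟩
  · have := scale_gen (-c) hg
    have e : (fun t => Real.exp (-c * t) • Real.exp (c * t) • D t) = D := by
      ext t f
      rw [smul_smul, ← Real.exp_add]; simp
    rw [e] at this
    simpa [sub_eq_add_neg] using this
  · simpa using scale_gen c hg

variable [CompleteSpace E]

lemma C0_bound {T : ℝ → E →L[ℝ] E} (hT : IsC0Semigroup T) (τ : ℝ) :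
    ∃ M, 0 ≤ M ∧ ∀ t, 0 ≤ t → t ≤ τ → ‖T t‖ ≤ M := by
  obtain ⟨M, hM⟩ := banach_steinhaus (g := fun t : Set.Icc (0:ℝ) τ => T t) (fun f => by
    have : ContinuousOn (fun t => T t f) (Set.Icc 0 τ) := (hT.2 f).mono Set.Icc_subset_Ici_self
    obtain ⟨C, hC⟩ := isCompact_Icc.exists_bound_of_continuousOn this
    exact ⟨C, fun t => hC t t.2⟩)
  exact ⟨max M 0, le_max_right _ _, fun t h0 h1 => (hM ⟨t, h0, h1⟩).trans (le_max_left _ _)⟩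

lemma C0_cont {X : Type*} [TopologicalSpace X] {T : ℝ → E →L[ℝ] E} (hT : IsC0Semigroup T)
    {φ : X → ℝ} {ψ : X → E} (hφ : Continuous φ) (hψ : Continuous ψ) :
    Continuous fun x => T (max (φ x) 0) (ψ x) := by
  rw [continuous_iff_continuousAt]
  intro x₀
  obtain ⟨M, hM0, hM⟩ := C0_bound hT (max (φ x₀) 0 + 1)
  have hm : Continuous fun x => max (φ x) 0 := hφ.max continuous_const
  have hfix : Continuous fun x => T (max (φ x) 0) (ψ x₀) :=
    (hT.2 (ψ x₀)).comp_continuous hm (fun x => Set.mem_Ici.2 (le_max_right _ _))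
  have hev : ∀ᶠ x in 𝓝 x₀, max (φ x) 0 < max (φ x₀) 0 + 1 :=
    hm.continuousAt.eventually (gt_mem_nhds (by linarith))
  have h1 : Tendsto (fun x => T (max (φ x) 0) (ψ x - ψ x₀)) (𝓝 x₀) (𝓝 0) := by
    have h2 : Tendsto (fun x => M * ‖ψ x - ψ x₀‖) (𝓝 x₀) (𝓝 0) := by
      have : Continuous (fun x => M * ‖ψ x - ψ x₀‖) := by fun_prop
      simpa using this.tendsto x₀
    refine squeeze_zero_norm' ?_ h2
    filter_upwards [hev] with x hx
    exact (T _).le_of_opNorm_le (hM _ (le_max_right _ _) hx.le) _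
  have := h1.add (hfix.tendsto x₀)
  rw [zero_add] at this
  refine this.congr fun x => ?_
  simp

/-- Convolution integrals are continuous. -/
lemma conv_cont {T : ℝ → E →L[ℝ] E} (hT : IsC0Semigroup T) {g : ℝ → E} (hg : Continuous g)
    {s : ℝ → ℝ} (hs : Continuous s) :
    Continuous fun t => ∫ r in (0:ℝ)..s t, T (max (t - r) 0) (g r) := by
  apply intervalIntegral.continuous_parametric_intervalIntegral_of_continuous _ hs
  exact C0_cont hT (φ := fun x : ℝ × ℝ => x.1 - x.2) (by fun_prop) (hg.comp continuous_snd)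

lemma conv_ii {T : ℝ → E →L[ℝ] E} (hT : IsC0Semigroup T) {g : ℝ → E} (hg : Continuous g)
    (t a b : ℝ) : IntervalIntegrable (fun r => T (max (t - r) 0) (g r)) volume a b :=
  (C0_cont hT (φ := fun r => t - r) (by fun_prop) hg).intervalIntegrable _ _

lemma conv_norm {T : ℝ → E →L[ℝ] E} {g : ℝ → E} (hg : Continuous g)
    {t M : ℝ} (ht : 0 ≤ t) (hM : ∀ r, 0 ≤ r → r ≤ t → ‖T r‖ ≤ M) :
    ‖∫ r in (0:ℝ)..t, T (max (t - r) 0) (g r)‖ ≤ M * ∫ r in (0:ℝ)..t, ‖g r‖ := by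
  rw [← intervalIntegral.integral_const_mul]
  refine intervalIntegral.norm_integral_le_of_norm_le ht ?_
    ((continuous_const.mul hg.norm).intervalIntegrable _ _)
  refine ae_of_all _ fun r hr => ?_
  exact (T _).le_of_opNorm_le (hM _ (le_max_right _ _) (max_le (by linarith [hr.1]) ht)) _

/-- Uniqueness for the Volterra equation. -/
lemma volt_unique {T : ℝ → E →L[ℝ] E} (hT : IsC0Semigroup T) (B : E →L[ℝ] E) {u v : ℝ → E}
    {f : ℝ → E} (hu : Continuous u) (hv : Continuous v)
    (h1 : ∀ t, 0 ≤ t → u t = f t + ∫ r in (0:ℝ)..t, T (max (t - r) 0) (B (u r)))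
    (h2 : ∀ t, 0 ≤ t → v t = f t + ∫ r in (0:ℝ)..t, T (max (t - r) 0) (B (v r)))
    (t : ℝ) (ht : 0 ≤ t) : u t = v t := by
  obtain ⟨M, hM0, hM⟩ := C0_bound hT t
  have := gron0 (u := fun t => ‖u t - v t‖) (C := M * ‖B‖) (τ := t) (by positivity)
    (by fun_prop) ht ?_
  · exact sub_eq_zero.1 (norm_le_zero_iff.1 this)
  intro s hs0 hst
  have e : u s - v s = ∫ r in (0:ℝ)..s, T (max (s - r) 0) (B (u r - v r)) := by
    rw [h1 s hs0, h2 s hs0, add_sub_add_left_eq_sub,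
      ← intervalIntegral.integral_sub (conv_ii hT (by fun_prop) _ _ _)
        (conv_ii hT (by fun_prop) _ _ _)]
    simp
  rw [e]
  refine (conv_norm (g := fun r => B (u r - v r)) (by fun_prop) hs0
    fun r h0 h1 => hM r h0 (h1.trans hst)).trans ?_
  rw [mul_assoc]
  refine mul_le_mul_of_nonneg_left ?_ hM0
  rw [← intervalIntegral.integral_const_mul]
  refine intervalIntegral.integral_mono_on hs0 ?_ ?_ fun r _ => B.le_opNorm _
  all_goals apply Continuous.intervalIntegrable; fun_prop

end Abstract
end AbsAux

namespace AbsAux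
section Abstract2

variable {E : Type*} [NormedAddCommGroup E] [NormedSpace ℝ E]

/-- Terms of the Dyson-Phillips series. -/
def vser (T : ℝ → E →L[ℝ] E) (B : E →L[ℝ] E) (f : E) : ℕ → ℝ → E
  | 0 => fun t => T (max t 0) f
  | n + 1 => fun t => ∫ r in (0:ℝ)..max t 0, T (max (max t 0 - r) 0) (B (vser T B f n r))

variable [CompleteSpace E]

lemma vser_cont {T : ℝ → E →L[ℝ] E} (hT : IsC0Semigroup T) (B : E →L[ℝ] E) (f : E) (n : ℕ) :
    Continuous (vser T B f n) := by
  induction n with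
  | zero => exact C0_cont hT continuous_id continuous_const
  | succ n ih =>
    exact (conv_cont hT (g := fun r => B (vser T B f n r)) (by fun_prop) continuous_id).comp
      (continuous_id.max continuous_const)

lemma vser_bound {T : ℝ → E →L[ℝ] E} (hT : IsC0Semigroup T) (B : E →L[ℝ] E) (f : E) {M τ : ℝ}
    (hτ : 0 ≤ τ) (hM0 : 0 ≤ M) (hM : ∀ t, 0 ≤ t → t ≤ τ → ‖T t‖ ≤ M) (n : ℕ) :
    ∀ t, t ≤ τ → ‖vser T B f n t‖ ≤ M * ‖f‖ * ((M * ‖B‖) ^ n * (max t 0) ^ n / n.factorial) := by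
  induction n with
  | zero =>
    intro t ht
    simpa [vser] using (T _).le_of_opNorm_le (hM _ (le_max_right t 0) (max_le ht hτ)) f
  | succ n ih =>
    intro t ht
    have hm : 0 ≤ max t 0 := le_max_right _ _
    have hmτ : max t 0 ≤ τ := max_le ht hτ
    have hc := vser_cont hT B f n
    refine (conv_norm (g := fun r => B (vser T B f n r)) (by fun_prop) hm
      fun r h0 h1 => hM r h0 (h1.trans hmτ)).trans ?_
    have : ∫ r in (0:ℝ)..max t 0, ‖B (vser T B f n r)‖ ≤ ∫ r in (0:ℝ)..max t 0,
        (‖B‖ * (M * ‖f‖ * ((M * ‖B‖) ^ n / n.factorial))) * r ^ n := by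
      refine intervalIntegral.integral_mono_on hm ?_ ?_ fun r hr => ?_
      · apply Continuous.intervalIntegrable; fun_prop
      · apply Continuous.intervalIntegrable; fun_prop
      · have h1 := ih r (hr.2.trans hmτ)
        rw [max_eq_left hr.1] at h1
        refine (B.le_opNorm _).trans ((mul_le_mul_of_nonneg_left h1 (norm_nonneg _)).trans_eq ?_)
        ring
    refine (mul_le_mul_of_nonneg_left this hM0).trans_eq ?_
    rw [intervalIntegral.integral_const_mul, integral_pow, Nat.factorial_succ]
    push_cast
    field_simp
    simp only [ne_eq, Nat.add_eq_zero_iff, one_ne_zero, and_false, not_false_eq_true, zero_pow,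
      sub_zero]
    ring

lemma volt_exists {T : ℝ → E →L[ℝ] E} (hT : IsC0Semigroup T) (B : E →L[ℝ] E) (f : E) :
    ∃ u : ℝ → E, Continuous u ∧
      ∀ t, 0 ≤ t → u t = T t f + ∫ r in (0:ℝ)..t, T (max (t - r) 0) (B (u r)) := by
  have key : ∀ τ : ℝ, 0 ≤ τ → ∃ b : ℕ → ℝ, Summable b ∧
      ∀ n t, t ≤ τ → ‖vser T B f n t‖ ≤ b n := by
    intro τ hτ
    obtain ⟨M, hM0, hM⟩ := C0_bound hT τ
    refine ⟨fun n => M * ‖f‖ * ((M * ‖B‖ * τ) ^ n / n.factorial),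
      (Real.summable_pow_div_factorial _).mul_left _, fun n t ht => ?_⟩
    refine (vser_bound hT B f hτ hM0 hM n t ht).trans ?_
    simp only [mul_pow (M * ‖B‖) τ]
    have := max_le ht hτ
    gcongr
  have hsum : ∀ t, Summable fun n => vser T B f n t := fun t => by
    obtain ⟨b, hb, h⟩ := key (max t 0) (le_max_right _ _)
    exact Summable.of_norm_bounded hb fun n => h n t (le_max_left _ _)
  refine ⟨fun t => ∑' n, vser T B f n t, ?_, fun t ht => ?_⟩
  · rw [continuous_iff_continuousAt]
    intro t
    obtain ⟨b, hb, h⟩ := key (max t 0 + 1) (by positivity)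
    have := continuousOn_tsum (s := Set.Iio (max t 0 + 1))
      (fun n => (vser_cont hT B f n).continuousOn) hb (fun n t ht => h n t (le_of_lt ht))
    exact this.continuousAt (Iio_mem_nhds (by linarith [le_max_left t 0]))
  · simp only
    rw [(hsum t).tsum_eq_zero_add]
    congr 1
    · simp [vser, ht]
    · simp only [vser, max_eq_left ht]
      obtain ⟨b, hb, h⟩ := key t ht
      obtain ⟨M, hM0, hM⟩ := C0_bound hT t
      refine (intervalIntegral.hasSum_integral_of_dominated_convergence
        (bound := fun n _ => M * (‖B‖ * b n)) ?_ ?_ ?_ ?_ ?_).tsum_eq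
      · intro n
        have := vser_cont hT B f n
        exact (C0_cont hT (φ := fun r => t - r) (by fun_prop)
          (by fun_prop : Continuous fun r => B (vser T B f n r))).aestronglyMeasurable
      · intro n
        refine ae_of_all _ fun r hr => ?_
        rw [Set.uIoc_of_le ht] at hr
        refine ((T _).le_of_opNorm_le
          (hM _ (le_max_right _ _) (max_le (by linarith [hr.1]) ht)) _).trans ?_
        refine mul_le_mul_of_nonneg_left ?_ hM0
        exact (B.le_opNorm _).trans (mul_le_mul_of_nonneg_left (h n r hr.2) (norm_nonneg _))
      · exact ae_of_all _ fun r _ => (hb.mul_left _).mul_left _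
      · exact intervalIntegrable_const
      · refine ae_of_all _ fun r _ => ?_
        exact ((hsum r).hasSum.mapL B).mapL (T (max (t - r) 0))

/-- `S` satisfies the variation of constants formula. -/
def IsVolt (T S : ℝ → E →L[ℝ] E) (B : E →L[ℝ] E) : Prop :=
  ∀ f t, 0 ≤ t → S t f = T t f + ∫ r in (0:ℝ)..t, T (max (t - r) 0) (B (S (max r 0) f))

lemma conv_deriv0 {h : ℝ → ℝ → E} (hc : Continuous h.uncurry) :
    Tendsto (fun t : ℝ => t⁻¹ • ∫ r in (0:ℝ)..t, h t r) (𝓝[>] 0) (𝓝 (h 0 0)) := by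
  rw [Metric.tendsto_nhds]
  intro ε hε
  have h1 := Metric.continuousAt_iff.1 (hc.continuousAt (x := (0, 0))) (ε / 2) (by positivity)
  obtain ⟨δ, hδ, h1⟩ := h1
  filter_upwards [Ioo_mem_nhdsGT hδ] with t ht
  have hint : IntervalIntegrable (h t) volume 0 t :=
    (hc.comp (by fun_prop : Continuous fun r : ℝ => (t, r))).intervalIntegrable _ _
  have h2 : ‖∫ r in (0:ℝ)..t, (h t r - h 0 0)‖ ≤ ε / 2 * |t - 0| := by
    apply intervalIntegral.norm_integral_le_of_norm_le_const
    intro r hr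
    rw [Set.uIoc_of_le ht.1.le] at hr
    rw [← dist_eq_norm]
    refine (h1 (x := (t, r)) ?_).le
    rw [Prod.dist_eq]
    simp only [dist_zero_right, Real.norm_eq_abs, max_lt_iff]
    rw [abs_of_pos ht.1, abs_of_pos hr.1]
    exact ⟨ht.2, hr.2.trans_lt ht.2⟩
  rw [intervalIntegral.integral_sub hint intervalIntegrable_const,
    intervalIntegral.integral_const, sub_zero, abs_of_pos ht.1] at h2
  rw [dist_eq_norm]
  have h3 : t⁻¹ • (∫ r in (0:ℝ)..t, h t r) - h 0 0 = t⁻¹ • ((∫ r in (0:ℝ)..t, h t r) - t • h 0 0) := by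
    rw [smul_sub, smul_smul, inv_mul_cancel₀ ht.1.ne', one_smul]
  rw [h3, norm_smul, norm_inv, Real.norm_eq_abs, abs_of_pos ht.1]
  calc t⁻¹ * _ ≤ t⁻¹ * (ε / 2 * t) := by
        have := ht.1
        gcongr
    _ = ε / 2 := by have := ht.1.ne'; field_simp
    _ < ε := by linarith

/-- Bounded perturbation theorem. -/
theorem pert_exists {T : ℝ → E →L[ℝ] E} (hT : IsC0Semigroup T) (B : E →L[ℝ] E) :
    ∃ S, IsPert T S B ∧ IsVolt T S B := by
  choose u huc hu using volt_exists hT B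
  have hadd : ∀ f g t, 0 ≤ t → u (f + g) t = u f t + u g t := by
    intro f g t ht
    have h1 := huc f
    have h2 := huc g
    refine volt_unique hT B (v := fun t => u f t + u g t) (huc _) (by fun_prop) (hu (f + g)) ?_ t ht
    intro t ht
    simp only [map_add]
    rw [intervalIntegral.integral_add (conv_ii hT (by fun_prop) _ _ _)
      (conv_ii hT (by fun_prop) _ _ _), hu f t ht, hu g t ht]
    abel
  have hsmul : ∀ (c : ℝ) f t, 0 ≤ t → u (c • f) t = c • u f t := by
    intro c f t ht
    have h1 := huc f
    refine volt_unique hT B (v := fun t => c • u f t) (huc _) (by fun_prop) (hu (c • f)) ?_ t ht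
    intro t ht
    simp only [map_smul]
    rw [intervalIntegral.integral_smul, ← smul_add, ← hu f t ht]
  have hbd : ∀ t, 0 ≤ t → ∃ C, ∀ f, ‖u f t‖ ≤ C * ‖f‖ := by
    intro t ht
    obtain ⟨M, hM0, hM⟩ := C0_bound hT t
    refine ⟨M + M * ‖B‖ * (Real.exp (M * ‖B‖ * t) * (t * M)), fun f => ?_⟩
    have hf := huc f
    have := gron (u := fun t => ‖u f t‖) (a := fun _ => M * ‖f‖) (C := M * ‖B‖) (τ := t)
      (by positivity) (by fun_prop) (by fun_prop) (fun _ => by positivity) ht ?_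
    · simp only [intervalIntegral.integral_const, smul_eq_mul, sub_zero] at this
      refine this.trans_eq (by ring)
    intro s hs0 hst
    rw [hu f s hs0]
    refine (norm_add_le _ _).trans (add_le_add ((T _).le_of_opNorm_le (hM _ hs0 hst) _) ?_)
    refine (conv_norm (g := fun r => B (u f r)) (by fun_prop) hs0
      fun r h0 h1 => hM r h0 (h1.trans hst)).trans ?_
    rw [mul_assoc]
    refine mul_le_mul_of_nonneg_left ?_ hM0
    rw [← intervalIntegral.integral_const_mul]
    refine intervalIntegral.integral_mono_on hs0 ?_ ?_ fun r _ => B.le_opNorm _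
    all_goals apply Continuous.intervalIntegrable; fun_prop
  let S : ℝ → E →L[ℝ] E := fun t => LinearMap.mkContinuousOfExistsBound
    { toFun := fun f => u f (max t 0)
      map_add' := fun f g => hadd f g _ (le_max_right _ _)
      map_smul' := fun c f => hsmul c f _ (le_max_right _ _) } (hbd _ (le_max_right _ _))
  have hSu : ∀ f t, S t f = u f (max t 0) := fun f t => rfl
  have hSu' : ∀ f t, 0 ≤ t → S t f = u f t := fun f t ht => by rw [hSu, max_eq_left ht]
  have hVolt : IsVolt T S B := by
    intro f t ht
    rw [hSu' f t ht, hu f t ht]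
    congr 1
    refine intervalIntegral.integral_congr fun r hr => ?_
    rw [Set.uIcc_of_le ht] at hr
    rw [max_eq_left hr.1, hSu' f r hr.1]
  have hu0 : ∀ f, u f 0 = f := fun f => by
    rw [hu f 0 le_rfl, hT.1.1]; simp
  have hC0 : IsC0Semigroup S := by
    refine ⟨⟨?_, ?_⟩, fun f => ?_⟩
    · ext f
      rw [hSu' f 0 le_rfl, hu0]; rfl
    · intro s t hs ht
      ext f
      rw [ContinuousLinearMap.comp_apply, hSu' _ _ (add_nonneg hs ht), hSu' f t ht, hSu' _ s hs]
      have hf := huc f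
      refine volt_unique hT B (u := fun s => u f (s + t)) (v := u (u f t))
        (f := fun s => T s (u f t)) (by fun_prop) (huc _) ?_ (hu _) s hs
      intro s hs
      have hii := fun a b => conv_ii hT (g := fun r => B (u f r)) (by fun_prop) (s + t) a b
      rw [hu f (s + t) (add_nonneg hs ht), hT.1.2 s t hs ht]
      conv_rhs => rw [hu f t ht]
      rw [← intervalIntegral.integral_add_adjacent_intervals (hii 0 t) (hii t (s + t)),
        map_add, ← ContinuousLinearMap.intervalIntegral_comp_comm _ (conv_ii hT (by fun_prop) _ _ _)]
      rw [ContinuousLinearMap.comp_apply, add_assoc]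
      congr 1
      congr 1
      · refine intervalIntegral.integral_congr fun r hr => ?_
        rw [Set.uIcc_of_le ht] at hr
        have h1 : 0 ≤ t - r := by linarith [hr.2]
        rw [max_eq_left h1, max_eq_left (by linarith : 0 ≤ s + t - r),
          show s + t - r = s + (t - r) by ring, hT.1.2 s _ hs h1]
        rfl
      · have := intervalIntegral.integral_comp_add_right (a := 0) (b := s)
          (fun r => T (max (s + t - r) 0) (B (u f r))) t
        rw [zero_add] at this
        rw [← this]
        simp
    · refine (huc f).continuousOn.congr fun t ht => hSu' f t ht
  refine ⟨S, ⟨hC0, fun f g => ?_⟩, hVolt⟩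
  have hlim : Tendsto (fun t : ℝ => t⁻¹ • ∫ r in (0:ℝ)..t, T (max (t - r) 0) (B (u f r)))
      (𝓝[>] 0) (𝓝 (B f)) := by
    have hf := huc f
    have := conv_deriv0 (h := fun t r => T (max (t - r) 0) (B (u f r)))
      (C0_cont hT (φ := fun x : ℝ × ℝ => x.1 - x.2) (ψ := fun x => B (u f x.2))
        (by fun_prop) (by fun_prop))
    simpa [hu0, hT.1.1] using this
  have hEq : ∀ t ∈ Set.Ioi (0:ℝ), t⁻¹ • (S t f - f) = t⁻¹ • (T t f - f)
      + t⁻¹ • ∫ r in (0:ℝ)..t, T (max (t - r) 0) (B (u f r)) := by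
    intro t ht
    rw [hSu' f t (le_of_lt ht), hu f t (le_of_lt ht), ← smul_add]
    congr 1; abel
  unfold InGenerator
  constructor
  · intro h
    refine (h.sub hlim).congr' ?_
    filter_upwards [self_mem_nhdsWithin] with t ht
    rw [hEq t ht]; abel
  · intro h
    have := h.add hlim
    rw [sub_add_cancel] at this
    refine this.congr' ?_
    filter_upwards [self_mem_nhdsWithin] with t ht
    rw [hEq t ht]

lemma gen_dense {D : ℝ → E →L[ℝ] E} (hD : IsC0Semigroup D) :
    Dense {f : E | ∃ g, InGenerator D f g} := by
  intro f
  have hc : Continuous fun r => D (max r 0) f := C0_cont hD continuous_id continuous_const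
  have hlim := conv_deriv0 (h := fun _ r => D (max r 0) f) (hc.comp continuous_snd)
  simp only [max_self, hD.1.1, ContinuousLinearMap.id_apply] at hlim
  refine mem_closure_of_tendsto hlim ?_
  filter_upwards [self_mem_nhdsWithin] with h hh
  have hh : 0 < h := hh
  refine ⟨h⁻¹ • (D h f - f), ?_⟩
  unfold InGenerator
  have h1 := conv_deriv0 (h := fun _ r => D (max (h + r) 0) f)
    (by
      have : Continuous fun r => D (max (h + r) 0) f := hc.comp (continuous_const.add continuous_id)
      exact this.comp continuous_snd)
  have h2 := ((h1.sub hlim)).const_smul h⁻¹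
  simp only [add_zero, max_eq_left hh.le] at h2
  refine h2.congr' ?_
  filter_upwards [self_mem_nhdsWithin] with r hr
  have hr : 0 < r := hr
  have hii : ∀ a b : ℝ, IntervalIntegrable (fun r => D (max r 0) f) volume a b :=
    fun a b => hc.intervalIntegrable _ _
  have e1 : D r (∫ s in (0:ℝ)..h, D (max s 0) f) = ∫ s in r..(h+r), D (max s 0) f := by
    rw [← ContinuousLinearMap.intervalIntegral_comp_comm _ (hii _ _)]
    have := intervalIntegral.integral_comp_add_right (a := 0) (b := h) (fun s => D (max s 0) f) r
    rw [zero_add] at this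
    rw [← this]
    refine intervalIntegral.integral_congr fun s hs => ?_
    rw [Set.uIcc_of_le hh.le] at hs
    rw [max_eq_left hs.1, max_eq_left (by linarith [hs.1]), add_comm s r, hD.1.2 r s hr.le hs.1]
    rfl
  have e2 : ∫ s in (0:ℝ)..r, D (max (h + s) 0) f = ∫ s in h..(h + r), D (max s 0) f := by
    rw [intervalIntegral.integral_comp_add_left (fun s => D (max s 0) f) h, add_zero]
  have e3 : (∫ s in r..(h+r), D (max s 0) f) - (∫ s in (0:ℝ)..h, D (max s 0) f)
      = (∫ s in h..(h + r), D (max s 0) f) - ∫ s in (0:ℝ)..r, D (max s 0) f := by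
    rw [← intervalIntegral.integral_interval_sub_left (hii 0 (h+r)) (hii 0 r),
      ← intervalIntegral.integral_interval_sub_left (hii 0 (h+r)) (hii 0 h)]
    abel
  rw [map_smul, ← smul_sub, e1, ← smul_sub, e3, e2, smul_comm]

lemma gen_orbit {D : ℝ → E →L[ℝ] E} (hD : IsC0Semigroup D) {f g : E} (h : InGenerator D f g)
    {s : ℝ} (hs : 0 ≤ s) : InGenerator D (D s f) (D s g) := by
  unfold InGenerator at *
  refine ((D s).continuous.tendsto g |>.comp h).congr' ?_
  filter_upwards [self_mem_nhdsWithin] with t ht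
  have ht : 0 < t := ht
  simp only [Function.comp, map_smul, map_sub]
  rw [← ContinuousLinearMap.comp_apply, ← ContinuousLinearMap.comp_apply,
    ← hD.1.2 s t hs ht.le, ← hD.1.2 t s ht.le hs, add_comm]

/-- A `C₀`-semigroup is determined by its generator. -/
theorem gen_unique {T D : ℝ → E →L[ℝ] E} (hT : IsC0Semigroup T) (hD : IsC0Semigroup D)
    (h : ∀ f g, InGenerator D f g → InGenerator T f g) (t : ℝ) (ht : 0 ≤ t) : D t = T t := by
  refine ContinuousLinearMap.ext_on (s := {f : E | ∃ g, InGenerator D f g}) 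
    (by
      have := gen_dense hD
      exact this.mono Submodule.subset_span) ?_
  rintro f ⟨g, hg⟩
  obtain ⟨M, hM0, hM⟩ := C0_bound hT t
  have hcD : Continuous fun r => D (max r 0) f := C0_cont hD continuous_id continuous_const
  have hc : Continuous fun s => T (max (t - s) 0) (D (max s 0) f) :=
    C0_cont hT (φ := fun s => t - s) (by fun_prop) hcD
  have := constant_of_has_deriv_right_zero (a := 0) (b := t) hc.continuousOn ?_ t ⟨ht, le_rfl⟩
  · simpa [ht, hT.1.1, hD.1.1] using this
  intro s hs
  suffices hsuff : Tendsto (fun r : ℝ => r⁻¹ • (T (max (t - (s + r)) 0) (D (max (s + r) 0) f)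
      - T (max (t - s) 0) (D (max s 0) f))) (𝓝[>] 0) (𝓝 0) by
    rw [← hasDerivWithinAt_Ioi_iff_Ici, hasDerivWithinAt_iff_tendsto_slope' (by simp)]
    have hsh : Tendsto (fun y : ℝ => y - s) (𝓝[>] s) (𝓝[>] 0) := by
      refine tendsto_nhdsWithin_iff.2 ⟨?_, ?_⟩
      · have : Continuous fun y : ℝ => y - s := by fun_prop
        have := this.tendsto s
        rw [sub_self] at this
        exact this.mono_left nhdsWithin_le_nhds
      · filter_upwards [self_mem_nhdsWithin] with y hy
        exact sub_pos.2 (Set.mem_Ioi.1 hy)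
    refine (hsuff.comp hsh).congr fun y => ?_
    simp [slope_def_module]
  set k := D s f with hk
  have hk1 := gen_orbit hD hg hs.1
  have hk2 := h _ _ hk1
  have hz : Tendsto (fun r : ℝ => M * ‖r⁻¹ • (D r k - k) - r⁻¹ • (T r k - k)‖) (𝓝[>] 0) (𝓝 0) := by
    have := ((hk1.sub hk2).norm).const_mul M
    simpa using this
  refine squeeze_zero_norm' ?_ hz
  filter_upwards [Ioo_mem_nhdsGT (sub_pos.2 hs.2)] with r hr
  have h1 : 0 ≤ t - s - r := by linarith [hr.2]
  have e : r⁻¹ • (T (max (t - (s + r)) 0) (D (max (s + r) 0) f) - T (max (t - s) 0) (D (max s 0) f))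
      = T (t - s - r) (r⁻¹ • (D r k - k) - r⁻¹ • (T r k - k)) := by
    have hts : T (t - s) k = T (t - s - r) (T r k) := by
      have e0 := hT.1.2 _ r h1 hr.1.le
      rw [sub_add_cancel] at e0
      rw [e0]; rfl
    have hDk : D (s + r) f = D r k := by
      rw [add_comm, hD.1.2 r s hr.1.le hs.1]; rfl
    rw [max_eq_left (by linarith : 0 ≤ t - (s + r)), max_eq_left (by linarith [hs.1, hr.1]),
      max_eq_left (by linarith [hs.2]), max_eq_left hs.1, ← hk, hts, hDk,
      show t - (s + r) = t - s - r by ring, ← smul_sub, map_smul]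
    simp
  rw [e]
  exact (T _).le_of_opNorm_le (hM _ h1 (by linarith [hs.1, hr.1])) _

theorem IsPert.volt {T S : ℝ → E →L[ℝ] E} {B : E →L[ℝ] E} (hT : IsC0Semigroup T)
    (h : IsPert T S B) : IsVolt T S B := by
  obtain ⟨R, hR, hV⟩ := pert_exists hT B
  have e : ∀ t, 0 ≤ t → S t = R t := gen_unique hR.1 h.1 fun f g hg => (hR.2 f g).2 ((h.2 f g).1 hg)
  intro f t ht
  rw [e t ht, hV f t ht]
  simp only [e _ (le_max_right _ _)]

end Abstract2
end AbsAux

namespace AbsAux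
section Conv

variable {E : Type*} [NormedAddCommGroup E] [NormedSpace ℝ E] [CompleteSpace E]

/-- Perturbations converge strongly if the unperturbed semigroups do. -/
theorem pert_conv (F : Submodule ℝ E) [CompleteSpace F] {S D : ℕ → ℝ → E →L[ℝ] E}
    {B : E →L[ℝ] E} {R U : ℝ → F →L[ℝ] F} {BF : F →L[ℝ] F}
    (hS : ∀ m, IsC0Semigroup (S m)) (hD : ∀ m, IsC0Semigroup (D m))
    (hV : ∀ m, IsVolt (S m) (D m) B) (hR : IsC0Semigroup R) (hU : IsC0Semigroup U)
    (hVF : IsVolt R U BF) (hB : ∀ f : F, ((BF f : F) : E) = B f)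
    (hbd : ∀ τ : ℝ, ∃ M, 0 ≤ M ∧ ∀ m t, 0 ≤ t → t ≤ τ → ‖S m t‖ ≤ M)
    (hlim : ∀ t, 0 ≤ t → ∀ f : F, Tendsto (fun m => S m t f) atTop (𝓝 (R t f : F)))
    (τ : ℝ) (hτ : 0 ≤ τ) (f : F) :
    Tendsto (fun m => D m τ f) atTop (𝓝 (U τ f : F)) := by
  obtain ⟨M, hM0, hM⟩ := hbd τ
  obtain ⟨N, hN0, hN⟩ := C0_bound hR τ
  have hUc : Continuous fun r => U (max r 0) f := C0_cont hU continuous_id continuous_const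
  have hDc : ∀ m, Continuous fun r => D m (max r 0) (f : E) :=
    fun m => C0_cont (hD m) continuous_id continuous_const
  set g : ℝ → F := fun r => BF (U (max r 0) f) with hg
  have hgc : Continuous g := BF.continuous.comp hUc
  obtain ⟨G, hG⟩ := (isCompact_Icc (a := (0:ℝ)) (b := τ)).exists_bound_of_continuousOn
    hgc.continuousOn
  have hG0 : 0 ≤ G := (norm_nonneg _).trans (hG 0 ⟨le_rfl, hτ⟩)
  have hdiff : ∀ m t, 0 ≤ t → t ≤ τ → ∀ h : F, ‖S m t h - (R t h : F)‖ ≤ (M + N) * ‖h‖ := by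
    intro m t h0 h1 h
    refine (norm_sub_le _ _).trans ?_
    rw [add_mul]
    exact add_le_add ((S m t).le_of_opNorm_le (hM m t h0 h1) _)
      ((R t).le_of_opNorm_le (hN t h0 h1) _)
  let q : ℕ → ℝ → ℝ → ℝ := fun m t r =>
    ‖S m (max (t - r) 0) (g r) - (R (max (t - r) 0) (g r) : F)‖
  have hqc : ∀ m, Continuous (Function.uncurry (q m)) := by
    intro m
    have h1 := C0_cont (hS m) (φ := fun x : ℝ × ℝ => x.1 - x.2) (ψ := fun x => (g x.2 : E))
      (by fun_prop) (by fun_prop)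
    have h2 := C0_cont hR (φ := fun x : ℝ × ℝ => x.1 - x.2) (ψ := fun x => g x.2)
      (by fun_prop) (by fun_prop)
    exact (h1.sub (continuous_subtype_val.comp h2)).norm
  have hqct : ∀ m t, Continuous (q m t) := fun m t =>
    (hqc m).comp (by fun_prop : Continuous fun r : ℝ => (t, r))
  have hqb : ∀ m t r, 0 ≤ r → r ≤ t → t ≤ τ → q m t r ≤ (M + N) * G := by
    intro m t r h0 h1 h2
    refine (hdiff m _ (le_max_right _ _) (max_le (by linarith) hτ) _).trans ?_
    exact mul_le_mul_of_nonneg_left (hG r ⟨h0, h1.trans h2⟩) (by positivity)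
  let a : ℕ → ℝ → ℝ := fun m t =>
    ‖S m (max t 0) f - (R (max t 0) f : F)‖ + ∫ r in (0:ℝ)..max t 0, q m t r
  have hac : ∀ m, Continuous (a m) := by
    intro m
    have h1 := C0_cont (hS m) (φ := fun x : ℝ => x) (ψ := fun _ => (f : E))
      (by fun_prop) (by fun_prop)
    have h2 := C0_cont hR (φ := fun x : ℝ => x) (ψ := fun _ => f)
      (by fun_prop) (by fun_prop)
    refine (h1.sub (continuous_subtype_val.comp h2)).norm.add ?_
    exact intervalIntegral.continuous_parametric_intervalIntegral_of_continuous (hqc m)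
      (continuous_id.max continuous_const)
  have ha0 : ∀ m t, 0 ≤ a m t := fun m t => add_nonneg (norm_nonneg _)
    (intervalIntegral.integral_nonneg (le_max_right _ _) fun r _ => norm_nonneg _)
  have hlimq : ∀ t r, Tendsto (fun m => q m t r) atTop (𝓝 0) := by
    intro t r
    have := (hlim (max (t - r) 0) (le_max_right _ _) (g r)).sub_const
      ((R (max (t - r) 0) (g r) : F) : E)
    simpa using this.norm
  have hlima : ∀ t, 0 ≤ t → t ≤ τ → Tendsto (fun m => a m t) atTop (𝓝 0) := by
    intro t h0 h1
    have h2 : Tendsto (fun m => ‖S m (max t 0) f - (R (max t 0) f : F)‖) atTop (𝓝 0) := by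
      have := (hlim (max t 0) (le_max_right _ _) f).sub_const ((R (max t 0) f : F) : E)
      simpa using this.norm
    have h3 : Tendsto (fun m => ∫ r in (0:ℝ)..max t 0, q m t r) atTop
        (𝓝 (∫ r in (0:ℝ)..max t 0, (0:ℝ))) := by
      refine intervalIntegral.tendsto_integral_filter_of_dominated_convergence
        (fun _ => (M + N) * G) ?_ ?_ intervalIntegrable_const ?_
      · exact Eventually.of_forall fun m => (hqct m t).aestronglyMeasurable
      · refine Eventually.of_forall fun m => ae_of_all _ fun r hr => ?_
        rw [max_eq_left h0, Set.uIoc_of_le h0] at hr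
        rw [Real.norm_of_nonneg (norm_nonneg _)]
        exact hqb m t r hr.1.le hr.2 h1
      · exact ae_of_all _ fun r _ => hlimq t r
    simpa using h2.add h3
  have hab : ∀ m t, 0 ≤ t → t ≤ τ → a m t ≤ (M + N) * ‖f‖ + (M + N) * G * τ := by
    intro m t h0 h1
    refine add_le_add ?_ ?_
    · rw [max_eq_left h0]
      exact hdiff m t h0 h1 f
    · have h2 : ‖∫ r in (0:ℝ)..max t 0, q m t r‖ ≤ (M + N) * G * |max t 0 - 0| := by
        apply intervalIntegral.norm_integral_le_of_norm_le_const
        intro r hr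
        rw [max_eq_left h0, Set.uIoc_of_le h0] at hr
        rw [Real.norm_of_nonneg (norm_nonneg _)]
        exact hqb m t r hr.1.le hr.2 h1
      refine (le_abs_self _).trans (h2.trans ?_)
      rw [max_eq_left h0, sub_zero, abs_of_nonneg h0]
      gcongr
  have hinta : Tendsto (fun m => ∫ t in (0:ℝ)..τ, a m t) atTop (𝓝 0) := by
    have : Tendsto (fun m => ∫ t in (0:ℝ)..τ, a m t) atTop (𝓝 (∫ t in (0:ℝ)..τ, (0:ℝ))) := by
      refine intervalIntegral.tendsto_integral_filter_of_dominated_convergence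
        (fun _ => (M + N) * ‖f‖ + (M + N) * G * τ) ?_ ?_ intervalIntegrable_const ?_
      · exact Eventually.of_forall fun m => (hac m).aestronglyMeasurable
      · refine Eventually.of_forall fun m => ae_of_all _ fun r hr => ?_
        rw [Set.uIoc_of_le hτ] at hr
        rw [Real.norm_of_nonneg (ha0 _ _)]
        exact hab m r hr.1.le hr.2
      · refine ae_of_all _ fun r hr => ?_
        rw [Set.uIoc_of_le hτ] at hr
        exact hlima r hr.1.le hr.2
    simpa using this
  have hmain : ∀ m, ‖D m τ f - (U τ f : F)‖ ≤
      a m τ + M * ‖B‖ * (Real.exp (M * ‖B‖ * τ) * ∫ t in (0:ℝ)..τ, a m t) := by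
    intro m
    have hDm := hDc m
    have hwd : Continuous fun t => D m (max t 0) f - ((U (max t 0) f : F) : E) :=
      hDm.sub (continuous_subtype_val.comp hUc)
    have hwc := hwd.norm
    have hwB := B.continuous.comp hwd
    have := gron (u := fun t => ‖D m (max t 0) f - (U (max t 0) f : F)‖) (a := a m)
      (C := M * ‖B‖) (τ := τ) (by positivity) hwc (hac m) (ha0 m) hτ ?_
    · simpa only [max_eq_left hτ] using this
    intro t h0 h1
    have e2 : ((∫ r in (0:ℝ)..t, R (max (t - r) 0) (g r) : F) : E)
        = ∫ r in (0:ℝ)..t, ((R (max (t - r) 0) (g r) : F) : E) := by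
      have := (F.subtypeL).intervalIntegral_comp_comm (μ := volume) (a := 0) (b := t)
        (conv_ii hR hgc t 0 t)
      exact this.symm
    have i1 : IntervalIntegrable (fun r => S m (max (t - r) 0) (B (D m (max r 0) f - (U (max r 0) f : F))))
        volume 0 t := conv_ii (hS m) hwB _ _ _
    have i2 : IntervalIntegrable (fun r => S m (max (t - r) 0) (g r)) volume 0 t :=
      conv_ii (hS m) (by fun_prop) _ _ _
    have i3 : IntervalIntegrable (fun r => ((R (max (t - r) 0) (g r) : F) : E)) volume 0 t :=
      (continuous_subtype_val.comp
        (C0_cont hR (φ := fun r => t - r) (by fun_prop) hgc)).intervalIntegrable _ _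
    have e1 : D m (max t 0) f - (U (max t 0) f : F) = (S m (max t 0) f - (R (max t 0) f : F))
        + (∫ r in (0:ℝ)..t, S m (max (t - r) 0) (B (D m (max r 0) f - (U (max r 0) f : F))))
        + ∫ r in (0:ℝ)..t, (S m (max (t - r) 0) (g r) - (R (max (t - r) 0) (g r) : F)) := by
      rw [max_eq_left h0, hV m f t h0, hVF f t h0, Submodule.coe_add, e2,
        intervalIntegral.integral_sub i2 i3, add_assoc, ← add_sub_assoc,
        ← intervalIntegral.integral_add i1 i2]
      have : ∀ r, S m (max (t - r) 0) (B (D m (max r 0) f - (U (max r 0) f : F)))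
          + S m (max (t - r) 0) (g r) = S m (max (t - r) 0) (B (D m (max r 0) f)) := by
        intro r
        simp [hg, hB]
      simp only [this]
      abel
    rw [e1]
    refine (norm_add_le _ _).trans ?_
    have n1 : ‖∫ r in (0:ℝ)..t, (S m (max (t - r) 0) (g r) - (R (max (t - r) 0) (g r) : F))‖
        ≤ ∫ r in (0:ℝ)..max t 0, q m t r := by
      rw [max_eq_left h0]
      exact intervalIntegral.norm_integral_le_integral_norm h0
    have n2 : ‖∫ r in (0:ℝ)..t, S m (max (t - r) 0) (B (D m (max r 0) f - (U (max r 0) f : F)))‖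
        ≤ M * ‖B‖ * ∫ r in (0:ℝ)..t, ‖D m (max r 0) f - (U (max r 0) f : F)‖ := by
      refine (conv_norm (g := fun r => B (D m (max r 0) f - (U (max r 0) f : F)))
        hwB h0 fun r h2 h3 => hM m r h2 (h3.trans h1)).trans ?_
      rw [mul_assoc]
      refine mul_le_mul_of_nonneg_left ?_ hM0
      rw [← intervalIntegral.integral_const_mul]
      refine intervalIntegral.integral_mono_on h0 ?_ ?_ fun r _ => B.le_opNorm _
      · exact hwB.norm.intervalIntegrable _ _
      · exact (continuous_const.mul hwc).intervalIntegrable _ _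
    have n3 := norm_add_le (S m (max t 0) (f : E) - (R (max t 0) f : F))
      (∫ r in (0:ℝ)..t, S m (max (t - r) 0) (B (D m (max r 0) f - (U (max r 0) f : F))))
    simp only [a]
    linarith
  rw [tendsto_iff_norm_sub_tendsto_zero]
  refine squeeze_zero (fun _ => norm_nonneg _) hmain ?_
  have := (hlima τ hτ le_rfl).add ((hinta.const_mul (Real.exp (M * ‖B‖ * τ))).const_mul (M * ‖B‖))
  simpa using this

end Conv
end AbsAux

namespace AbsAux
section Lattice

variable {E : Type*} [NormedAddCommGroup E] [NormedSpace ℝ E]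
  [Lattice E] [HasSolidNorm E] [IsOrderedAddMonoid E] [IsOrderedModule ℝ E] [OrderClosedTopology E]

lemma iint_nonneg {g : ℝ → E} {t : ℝ} (ht : 0 ≤ t) (hg : ∀ r, 0 ≤ r → r ≤ t → 0 ≤ g r) :
    0 ≤ ∫ r in (0:ℝ)..t, g r := by
  rw [intervalIntegral.integral_of_le ht]
  refine integral_nonneg_of_ae ?_
  exact (ae_restrict_iff' measurableSet_Ioc).2 (ae_of_all _ fun r hr => hg r hr.1.le hr.2)

lemma norm_le_of_le {a b : E} (h0 : 0 ≤ a) (h : a ≤ b) : ‖a‖ ≤ ‖b‖ := by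
  apply norm_le_norm_of_abs_le_abs
  rwa [abs_of_nonneg h0, abs_of_nonneg (h0.trans h)]

lemma opNorm_le_of_dom {S T : E →L[ℝ] E} (h : ∀ f, 0 ≤ f → 0 ≤ S f ∧ S f ≤ T f) (f : E) :
    ‖S f‖ ≤ ‖T‖ * ‖f‖ := by
  have h1 : |S f| ≤ S |f| := by
    refine abs_le'.2 ⟨?_, ?_⟩
    · have := (h (|f| - f) (sub_nonneg.2 (le_abs_self f))).1
      rw [map_sub] at this
      exact sub_nonneg.1 this
    · have := (h (|f| + f) (by
        exact neg_le_iff_add_nonneg.1 (neg_le_abs f))).1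
      rw [map_add] at this
      exact neg_le_iff_add_nonneg.2 this
  have h2 := h |f| (abs_nonneg f)
  have h3 : ‖S f‖ ≤ ‖T |f|‖ := by
    rw [← norm_abs_eq_norm (S f)]
    exact norm_le_of_le (abs_nonneg _) (h1.trans h2.2)
  refine h3.trans ?_
  rw [← norm_abs_eq_norm f]
  exact T.le_opNorm _

variable [CompleteSpace E]

/-- Positive perturbations of positive semigroups. -/
theorem pos_pert {T S : ℝ → E →L[ℝ] E} {K : E →L[ℝ] E} (hT : IsC0Semigroup T)
    (hTp : ∀ t, 0 ≤ t → ∀ f, 0 ≤ f → 0 ≤ T t f) (hK : ∀ f, 0 ≤ f → 0 ≤ K f)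
    (h : IsPert T S K) {t : ℝ} (ht : 0 ≤ t) {f : E} (hf : 0 ≤ f) :
    0 ≤ S t f ∧ T t f ≤ S t f := by
  have hV := h.volt hT
  have hc : Continuous fun r => S (max r 0) f := C0_cont h.1 continuous_id continuous_const
  have hpos : ∀ t, 0 ≤ t → 0 ≤ S t f := by
    intro t ht
    obtain ⟨M, hM0, hM⟩ := C0_bound hT t
    let n : ℝ → E := fun r => (-(S (max r 0) f)) ⊔ 0
    have hn : Continuous n := hc.neg.sup continuous_const
    have hn0 : ∀ r, 0 ≤ n r := fun r => le_sup_right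
    have := gron0 (u := fun r => ‖n r‖) (C := M * ‖K‖) (τ := t) (by positivity) hn.norm ht ?_
    · have h0 : n t = 0 := norm_le_zero_iff.1 this
      have h1 : -(S (max t 0) f) ≤ n t := le_sup_left
      rw [h0, max_eq_left ht] at h1
      exact neg_nonpos.1 h1
    intro s hs hst
    have hKn : Continuous fun r => K (n r) := K.continuous.comp hn
    have hKs : Continuous fun r => K (S (max r 0) f) := K.continuous.comp hc
    have hJ : 0 ≤ ∫ r in (0:ℝ)..s, T (max (s - r) 0) (K (n r)) :=
      iint_nonneg hs fun r _ _ => hTp _ (le_max_right _ _) _ (hK _ (hn0 r))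
    have hle : n s ≤ ∫ r in (0:ℝ)..s, T (max (s - r) 0) (K (n r)) := by
      refine sup_le ?_ hJ
      rw [max_eq_left hs, hV f s hs, neg_le_iff_add_nonneg, add_comm, add_assoc,
        ← intervalIntegral.integral_add (conv_ii hT hKs _ _ _) (conv_ii hT hKn _ _ _)]
      refine add_nonneg (hTp s hs f hf) (iint_nonneg hs fun r _ _ => ?_)
      rw [← map_add, ← map_add]
      refine hTp _ (le_max_right _ _) _ (hK _ ?_)
      have : -(S (max r 0) f) ≤ n r := le_sup_left
      exact neg_le_iff_add_nonneg'.1 this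
    refine (norm_le_of_le (hn0 s) hle).trans ((conv_norm hKn hs
      fun r h0 h1 => hM r h0 (h1.trans hst)).trans ?_)
    rw [mul_assoc]
    refine mul_le_mul_of_nonneg_left ?_ hM0
    rw [← intervalIntegral.integral_const_mul]
    refine intervalIntegral.integral_mono_on hs (hKn.norm.intervalIntegrable _ _)
      ((continuous_const.mul hn.norm).intervalIntegrable _ _) fun r _ => K.le_opNorm _
  refine ⟨hpos t ht, ?_⟩
  rw [hV f t ht]
  refine le_add_of_nonneg_right (iint_nonneg ht fun r _ _ => ?_)
  exact hTp _ (le_max_right _ _) _ (hK _ (hpos _ (le_max_right _ _)))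

/-- Absorption: bounded nonnegative killing. -/
theorem absorb {T D : ℝ → E →L[ℝ] E} {K : E →L[ℝ] E} (hT : IsC0Semigroup T)
    (hTp : ∀ t, 0 ≤ t → ∀ f, 0 ≤ f → 0 ≤ T t f) {c : ℝ}
    (hK : ∀ f, 0 ≤ f → 0 ≤ K f ∧ K f ≤ c • f)
    (h : IsPert T D (-K)) {t : ℝ} (ht : 0 ≤ t) {f : E} (hf : 0 ≤ f) :
    0 ≤ D t f ∧ D t f ≤ T t f := by
  have hDp : ∀ t, 0 ≤ t → ∀ f, 0 ≤ f → 0 ≤ D t f := by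
    intro t ht f hf
    have h1 := (pos_pert hT hTp (fun f hf => by
      have := sub_nonneg.2 (hK f hf).2
      simpa [neg_add_eq_sub] using this) (scale_pert c h) ht hf).1
    have h2 : 0 ≤ Real.exp (-(c * t)) • (Real.exp (c * t) • D t f) :=
      smul_nonneg (Real.exp_pos _).le h1
    rwa [smul_smul, ← Real.exp_add, neg_add_cancel, Real.exp_zero, one_smul] at h2
  refine ⟨hDp t ht f hf, (pos_pert h.1 hDp (K := K) (fun f hf => (hK f hf).1) ?_ ht hf).2⟩
  simpa using h.symm hT

end Lattice

section LpPart

variable {Ω : Type*} [MeasurableSpace Ω] {μ : Measure Ω} {p : ℝ≥0∞} [Fact (1 ≤ p)]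

instance lpOrderedModule : IsOrderedModule ℝ (Lp ℝ p μ) :=
  IsOrderedModule.of_smul_nonneg fun a ha b hb => by
    rw [← Lp.coeFn_nonneg] at hb ⊢
    filter_upwards [hb, Lp.coeFn_smul a b] with x h1 h2
    rw [h2]
    exact mul_nonneg ha h1

lemma trunc_nonneg (V : Ω → ℝ≥0∞) (n : ℕ) (ω : Ω) : 0 ≤ trunc V n ω := ENNReal.toReal_nonneg

lemma trunc_le (V : Ω → ℝ≥0∞) (n : ℕ) (ω : Ω) : trunc V n ω ≤ n := by
  have := ENNReal.toReal_mono (ENNReal.natCast_ne_top n) (min_le_right (V ω) (n : ℝ≥0∞))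
  simpa [trunc] using this

lemma trunc_mono (V : Ω → ℝ≥0∞) {n m : ℕ} (h : n ≤ m) (ω : Ω) : trunc V n ω ≤ trunc V m ω := by
  refine ENNReal.toReal_mono (ne_top_of_le_ne_top (ENNReal.natCast_ne_top m) (min_le_right _ _)) ?_
  exact min_le_min le_rfl (by exact_mod_cast h)

lemma mul_aesm (hp : p ≠ ∞) {V : Ω → ℝ≥0∞} (hV : LocallyMeasurable μ V) (n : ℕ)
    (f : Lp ℝ p μ) : AEStronglyMeasurable (fun ω => trunc V n ω * f ω) μ := by
  have hp0 : p ≠ 0 := (zero_lt_one.trans_le (Fact.out : 1 ≤ p)).ne'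
  have hfm : Measurable (fun ω => f ω) := (Lp.stronglyMeasurable f).measurable
  let s : ℕ → Set Ω := fun k => {ω | (1 / ((k:ℝ) + 1)) ≤ ‖f ω‖}
  have hsm : ∀ k, MeasurableSet (s k) := fun k => measurableSet_le measurable_const hfm.norm
  have hfin : ∀ k, μ (s k) < ∞ := by
    intro k
    have hpos : (0:ℝ) < 1 / ((k:ℝ) + 1) := by positivity
    have := (Lp.memLp f).meas_ge_lt_top hp0 hp (ε := (⟨1 / ((k:ℝ) + 1), hpos.le⟩ : NNReal))
      (fun h => hpos.ne' (congrArg NNReal.toReal h))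
    exact this
  have h1 : ∀ k, AEMeasurable (trunc V n) (μ.restrict (s k)) := by
    intro k
    obtain ⟨g, hg, hgV⟩ := hV (s k) (hsm k) (hfin k)
    refine ⟨fun ω => (min (g ω) (n : ℝ≥0∞)).toReal,
      (hg.min measurable_const).ennreal_toReal, ?_⟩
    filter_upwards [hgV] with ω hω
    simp [trunc, hω]
  have h2 := AEMeasurable.iUnion h1
  have h3 := (aemeasurable_indicator_iff (MeasurableSet.iUnion hsm)).2 h2
  have h4 := (h3.mul hfm.aemeasurable).aestronglyMeasurable
  refine h4.congr (ae_of_all _ fun ω => ?_)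
  by_cases hω : ω ∈ ⋃ k, s k
  · simp [Set.indicator_of_mem hω]
  · have : f ω = 0 := by
      by_contra hne
      obtain ⟨k, hk⟩ := exists_nat_one_div_lt (norm_pos_iff.2 hne)
      exact hω (Set.mem_iUnion.2 ⟨k, hk.le⟩)
    simp [this]

/-- Multiplication operators by truncations. -/
theorem exists_mult (hp : p ≠ ∞) {V : Ω → ℝ≥0∞} (hV : LocallyMeasurable μ V) (n : ℕ) :
    ∃ B : Lp ℝ p μ →L[ℝ] Lp ℝ p μ, ∀ f, B f =ᵐ[μ] fun ω => trunc V n ω * f ω := by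
  have hb : ∀ (f : Lp ℝ p μ), ∀ᵐ ω ∂μ, ‖trunc V n ω * f ω‖ ≤ n * ‖f ω‖ := by
    intro f
    refine ae_of_all _ fun ω => ?_
    rw [norm_mul, Real.norm_of_nonneg (trunc_nonneg V n ω)]
    exact mul_le_mul_of_nonneg_right (trunc_le V n ω) (norm_nonneg _)
  have hm : ∀ f : Lp ℝ p μ, MemLp (fun ω => trunc V n ω * f ω) p μ := fun f =>
    (Lp.memLp f).of_le_mul (mul_aesm hp hV n f) (hb f)
  refine ⟨LinearMap.mkContinuous
    { toFun := fun f => (hm f).toLp _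
      map_add' := ?_
      map_smul' := ?_ } n ?_, fun f => (hm f).coeFn_toLp⟩
  · intro f g
    ext1
    filter_upwards [(hm (f + g)).coeFn_toLp, (hm f).coeFn_toLp, (hm g).coeFn_toLp,
      Lp.coeFn_add ((hm f).toLp _) ((hm g).toLp _), Lp.coeFn_add f g] with ω h1 h2 h3 h4 h5
    rw [h1, h4, Pi.add_apply, h2, h3, h5, Pi.add_apply]; ring
  · intro c f
    ext1
    filter_upwards [(hm (c • f)).coeFn_toLp, (hm f).coeFn_toLp,
      Lp.coeFn_smul c ((hm f).toLp _), Lp.coeFn_smul c f] with ω h1 h2 h4 h5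
    simp only [RingHom.id_apply]
    rw [h1, h4, Pi.smul_apply, h2, h5, Pi.smul_apply, smul_eq_mul, smul_eq_mul]; ring
  · intro f
    refine Lp.norm_le_mul_norm_of_ae_le_mul ?_
    filter_upwards [(hm f).coeFn_toLp, hb f] with ω h1 h2
    change ‖((hm f).toLp _) ω‖ ≤ _
    rwa [h1]

/-- Monotone order bounded sequences in `L_p` converge. -/
theorem lp_mono_conv (hp : p ≠ ∞) {u : ℕ → Lp ℝ p μ} {g : Lp ℝ p μ} (hu : Monotone u)
    (hg : ∀ n, u n ≤ g) : ∃ l, Tendsto u atTop (𝓝 l) := by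
  have hp0 : p ≠ 0 := (zero_lt_one.trans_le (Fact.out : 1 ≤ p)).ne'
  have hpr : 0 < p.toReal := ENNReal.toReal_pos hp0 hp
  have hmono : ∀ᵐ ω ∂μ, Monotone fun n => u n ω := by
    have : ∀ᵐ ω ∂μ, ∀ n, u n ω ≤ u (n + 1) ω :=
      ae_all_iff.2 fun n => (Lp.coeFn_le _ _).2 (hu (Nat.le_succ n))
    filter_upwards [this] with ω hω
    exact monotone_nat_of_le_succ hω
  have hbd : ∀ᵐ ω ∂μ, ∀ n, u n ω ≤ g ω := ae_all_iff.2 fun n => (Lp.coeFn_le _ _).2 (hg n)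
  let l : Ω → ℝ := fun ω => ⨆ n, u n ω
  have hlim : ∀ᵐ ω ∂μ, Tendsto (fun n => u n ω) atTop (𝓝 (l ω)) := by
    filter_upwards [hmono, hbd] with ω h1 h2
    exact tendsto_atTop_ciSup h1 ⟨g ω, by rintro _ ⟨n, rfl⟩; exact h2 n⟩
  have hlm : AEStronglyMeasurable l μ :=
    aestronglyMeasurable_of_tendsto_ae atTop (fun n => Lp.aestronglyMeasurable (u n)) hlim
  have hdom : ∀ᵐ ω ∂μ, ∀ n, ‖u n ω - l ω‖ ≤ ‖g ω - u 0 ω‖ ∧ ‖l ω - u 0 ω‖ ≤ ‖g ω - u 0 ω‖ := by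
    filter_upwards [hmono, hbd, hlim] with ω h1 h2 h3 n
    have h4 : l ω ≤ g ω := le_of_tendsto' h3 h2
    have h5 : u n ω ≤ l ω := h1.ge_of_tendsto h3 n
    have h6 : u 0 ω ≤ u n ω := h1 (Nat.zero_le n)
    simp only [Real.norm_eq_abs]
    rw [abs_of_nonpos (by linarith), abs_of_nonneg (by linarith : 0 ≤ l ω - u 0 ω),
      abs_of_nonneg (by linarith)]
    constructor <;> linarith
  have hgu : MemLp (fun ω => g ω - u 0 ω) p μ := (Lp.memLp g).sub (Lp.memLp (u 0))
  have hl : MemLp l p μ := by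
    have h1 : MemLp (fun ω => l ω - u 0 ω) p μ :=
      hgu.of_le (hlm.sub (Lp.aestronglyMeasurable (u 0))) (hdom.mono fun ω h => (h 0).2)
    have h2 := h1.add (Lp.memLp (u 0))
    refine (memLp_congr_ae (ae_of_all _ fun ω => ?_)).1 h2
    simp
  refine ⟨hl.toLp l, Lp.tendsto_Lp_of_tendsto_eLpNorm l hl ?_⟩
  have key : Tendsto (fun n => ∫⁻ ω, ‖u n ω - l ω‖ₑ ^ p.toReal ∂μ) atTop
      (𝓝 (∫⁻ _, 0 ∂μ)) := by
    refine tendsto_lintegral_of_dominated_convergence' (fun ω => ‖g ω - u 0 ω‖ₑ ^ p.toReal)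
      ?_ ?_ ?_ ?_
    · exact fun n => (((Lp.aestronglyMeasurable (u n)).sub hlm).enorm).pow_const _
    · intro n
      filter_upwards [hdom] with ω h
      exact ENNReal.rpow_le_rpow (enorm_le_iff_norm_le.2 (h n).1) hpr.le
    · exact (lintegral_rpow_enorm_lt_top_of_eLpNorm_lt_top hp0 hp hgu.2).ne
    · filter_upwards [hlim] with ω h
      have h1 : Tendsto (fun n => ‖u n ω - l ω‖ₑ) atTop (𝓝 0) := by
        have := (h.sub_const (l ω)).enorm
        simpa using this
      have := h1.ennrpow_const p.toReal
      rwa [ENNReal.zero_rpow_of_pos hpr] at this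
  rw [lintegral_zero] at key
  have h2 := key.ennrpow_const (1 / p.toReal)
  rw [ENNReal.zero_rpow_of_pos (by positivity)] at h2
  refine h2.congr fun n => ?_
  rw [eLpNorm_eq_lintegral_rpow_enorm_toReal hp0 hp]
  rfl

lemma band_ideal {P : Lp ℝ p μ →L[ℝ] Lp ℝ p μ} (hP : IsBandProjection P) {f g : Lp ℝ p μ} {c : ℝ}
    (hf : P f = f) (h0 : 0 ≤ g) (h1 : g ≤ c • f) : P g = g := by
  have h2 := (hP.2 (c • f - g) (sub_nonneg.2 h1)).2
  rw [map_sub, map_smul, hf] at h2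
  have h3 : g ≤ P g := (_root_.sub_le_sub_iff_left _).1 h2
  exact le_antisymm (hP.2 g h0).2 h3

lemma band_pos {P : Lp ℝ p μ →L[ℝ] Lp ℝ p μ} (hP : IsBandProjection P) {f : Lp ℝ p μ}
    (hf : P f = f) : P (f ⊔ 0) = f ⊔ 0 := by
  set a := f ⊔ 0
  set b := (-f) ⊔ 0
  have hab : a - b = f := by
    have := posPart_sub_negPart f
    exact this
  have hinf : a ⊓ b = 0 := posPart_inf_negPart_eq_zero f
  have ha := hP.2 a le_sup_right
  have hb := hP.2 b le_sup_right
  have e : a - P a = b - P b := by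
    have : P a - P b = a - b := by rw [← map_sub, hab, hf]
    rw [sub_eq_sub_iff_add_eq_add] at this ⊢
    rw [add_comm b, this, add_comm]
  have h1 : a - P a ≤ a ⊓ b := le_inf (sub_le_self _ ha.1) (e ▸ sub_le_self _ hb.1)
  rw [hinf] at h1
  exact le_antisymm ha.2 (sub_nonpos.1 h1)

end LpPart
end AbsAux

namespace AbsAux

section Final

variable {Ω : Type*} [MeasurableSpace Ω] {μ : Measure Ω} {p : ℝ≥0∞} [Fact (1 ≤ p)]

theorem lim_sg (hp : p ≠ ∞) {T : ℝ → Lp ℝ p μ →L[ℝ] Lp ℝ p μ} (hT : IsC0Semigroup T)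
    (F : Submodule ℝ (Lp ℝ p μ)) [CompleteSpace F] (hFc : IsClosed (F : Set (Lp ℝ p μ)))
    (hFp : ∀ f ∈ F, f ⊔ 0 ∈ F) {R : ℝ → F →L[ℝ] F} (hR : IsC0Semigroup R)
    {U : ℕ → ℝ → F →L[ℝ] F} (hU : ∀ n, IsC0Semigroup (U n))
    (hlow : ∀ n t, 0 ≤ t → ∀ f : F, 0 ≤ (f : Lp ℝ p μ) →
      ((R t f : F) : Lp ℝ p μ) ≤ (U n t f : F))
    (hmono : ∀ n t, 0 ≤ t → ∀ f : F, 0 ≤ (f : Lp ℝ p μ) →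
      ((U n t f : F) : Lp ℝ p μ) ≤ (U (n + 1) t f : F))
    (hdom : ∀ n t, 0 ≤ t → ∀ f : F, 0 ≤ (f : Lp ℝ p μ) →
      ((U n t f : F) : Lp ℝ p μ) ≤ T t f)
    (hnorm : ∀ n t, 0 ≤ t → ∀ f : F, ‖U n t f‖ ≤ ‖T t‖ * ‖f‖) :
    ∃ L : ℝ → F →L[ℝ] F,
        (∀ t : ℝ, 0 ≤ t → ∀ f : F, Tendsto (fun n : ℕ => U n t f) atTop (𝓝 (L t f))) ∧
        IsC0Semigroup L := by
  have hdec : ∀ f : F, ∃ a b : F, 0 ≤ (a : Lp ℝ p μ) ∧ 0 ≤ (b : Lp ℝ p μ) ∧ f = a - b := by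
    intro f
    refine ⟨⟨(f : Lp ℝ p μ) ⊔ 0, hFp _ f.2⟩, ⟨(-(f : Lp ℝ p μ)) ⊔ 0, hFp _ (F.neg_mem f.2)⟩,
      le_sup_right, le_sup_right, ?_⟩
    apply Subtype.ext
    exact (posPart_sub_negPart (f : Lp ℝ p μ)).symm
  have hexp : ∀ t, 0 ≤ t → ∀ f : F, 0 ≤ (f : Lp ℝ p μ) →
      ∃ l : F, Tendsto (fun n => U n t f) atTop (𝓝 l) := by
    intro t ht f hf
    obtain ⟨l, hl⟩ := lp_mono_conv hp (u := fun n => ((U n t f : F) : Lp ℝ p μ)) (g := T t f)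
      (monotone_nat_of_le_succ fun n => hmono n t ht f hf) (fun n => hdom n t ht f hf)
    have hlF : l ∈ F := hFc.mem_of_tendsto hl (Eventually.of_forall fun n => (U n t f).2)
    exact ⟨⟨l, hlF⟩, tendsto_subtype_rng.2 hl⟩
  have hex : ∀ t : ℝ, ∃ A : F →L[ℝ] F, 0 ≤ t →
      ∀ f : F, Tendsto (fun n => U n t f) atTop (𝓝 (A f)) := by
    intro t
    by_cases ht : 0 ≤ t
    · have : ∀ f : F, ∃ l : F, Tendsto (fun n => U n t f) atTop (𝓝 l) := by
        intro f
        obtain ⟨a, b, ha, hb, rfl⟩ := hdec f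
        obtain ⟨l, hl⟩ := hexp t ht a ha
        obtain ⟨k, hk⟩ := hexp t ht b hb
        exact ⟨l - k, by simpa using hl.sub hk⟩
      choose l hl using this
      refine ⟨continuousLinearMapOfTendsto (fun n => U n t) (f := l) (tendsto_pi_nhds.2 hl), ?_⟩
      intro _ f
      exact hl f
    · exact ⟨0, fun h => absurd h ht⟩
  choose L hL using hex
  refine ⟨L, hL, ?_⟩
  have hLn : ∀ t, 0 ≤ t → ∀ f : F, ‖L t f‖ ≤ ‖T t‖ * ‖f‖ := fun t ht f =>
    le_of_tendsto (hL t ht f).norm (Eventually.of_forall fun n => hnorm n t ht f)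
  have hsg : ∀ s t : ℝ, 0 ≤ s → 0 ≤ t → ∀ f, L (s + t) f = L s (L t f) := by
    intro s t hs ht f
    refine tendsto_nhds_unique (hL (s + t) (add_nonneg hs ht) f) ?_
    have h1 : ∀ n, U n (s + t) f = U n s (U n t f - L t f) + U n s (L t f) := by
      intro n
      rw [(hU n).1.2 s t hs ht, map_sub]
      simp
    have h2 : Tendsto (fun n => U n s (U n t f - L t f)) atTop (𝓝 0) := by
      have h3 : Tendsto (fun n => ‖T s‖ * ‖U n t f - L t f‖) atTop (𝓝 0) := by
        have := ((hL t ht f).sub_const (L t f)).norm.const_mul ‖T s‖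
        simpa using this
      exact squeeze_zero_norm (fun n => hnorm n s hs _) h3
    have h4 := h2.add (hL s hs (L t f))
    rw [zero_add] at h4
    exact h4.congr fun n => (h1 n).symm
  have h0 : ∀ f, L 0 f = f := by
    intro f
    refine tendsto_nhds_unique (hL 0 le_rfl f) ?_
    refine tendsto_const_nhds.congr fun n => ?_
    rw [(hU n).1.1]; rfl
  refine ⟨⟨ContinuousLinearMap.ext h0, fun s t hs ht => ContinuousLinearMap.ext (hsg s t hs ht)⟩,
    ?_⟩
  -- strong continuity at zero
  have hc0 : ∀ f : F, Tendsto (fun t => L t f) (𝓝[≥] 0) (𝓝 f) := by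
    have hpos : ∀ f : F, 0 ≤ (f : Lp ℝ p μ) → Tendsto (fun t => L t f) (𝓝[≥] 0) (𝓝 f) := by
      intro f hf
      have hRf : Tendsto (fun t => R t f) (𝓝[≥] 0) (𝓝 f) := by
        have := hR.2 f 0 Set.self_mem_Ici
        unfold ContinuousWithinAt at this
        simpa [hR.1.1] using this
      have hTf : Tendsto (fun t => T t (f : Lp ℝ p μ)) (𝓝[≥] 0) (𝓝 (f : Lp ℝ p μ)) := by
        have := hT.2 f 0 Set.self_mem_Ici
        unfold ContinuousWithinAt at this
        simpa [hT.1.1] using this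
      have hRf' : Tendsto (fun t => ((R t f : F) : Lp ℝ p μ)) (𝓝[≥] 0) (𝓝 (f : Lp ℝ p μ)) :=
        tendsto_subtype_rng.1 hRf
      have hd : Tendsto (fun t => ((L t f : F) : Lp ℝ p μ) - (R t f : F)) (𝓝[≥] 0) (𝓝 0) := by
        have h3 : Tendsto (fun t => ‖T t (f : Lp ℝ p μ) - (R t f : F)‖) (𝓝[≥] 0) (𝓝 0) := by
          have := (hTf.sub hRf').norm
          simpa using this
        refine squeeze_zero_norm' ?_ h3
        filter_upwards [self_mem_nhdsWithin] with t ht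
        have ht : 0 ≤ t := ht
        have hl : Tendsto (fun n => ((U n t f : F) : Lp ℝ p μ)) atTop (𝓝 ((L t f : F) : Lp ℝ p μ)) :=
          tendsto_subtype_rng.1 (hL t ht f)
        refine norm_le_of_le ?_ ?_
        · exact sub_nonneg.2 (ge_of_tendsto' hl fun n => hlow n t ht f hf)
        · exact sub_le_sub_right (le_of_tendsto' hl fun n => hdom n t ht f hf) _
      refine tendsto_subtype_rng.2 ?_
      have := hd.add hRf'
      simpa using this
    intro f
    obtain ⟨a, b, ha, hb, rfl⟩ := hdec f
    simpa using (hpos a ha).sub (hpos b hb)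
  intro f t₀ ht₀
  have ht₀ : 0 ≤ t₀ := ht₀
  obtain ⟨M, hM0, hM⟩ := C0_bound hT (t₀ + 1)
  have hest : ∀ s t, 0 ≤ s → s ≤ t₀ + 1 → s ≤ t → ‖L t f - L s f‖ ≤ M * ‖L (t - s) f - f‖ := by
    intro s t hs hs1 hst
    have : L t f = L s (L (t - s) f) := by
      rw [← hsg s (t - s) hs (sub_nonneg.2 hst)]; congr 2; ring
    rw [this, ← map_sub]
    exact (hLn s hs _).trans (mul_le_mul_of_nonneg_right (hM s hs hs1) (norm_nonneg _))
  have hest2 : ∀ t, 0 ≤ t → t ≤ t₀ + 1 → ‖L t f - L t₀ f‖ ≤ M * ‖L |t - t₀| f - f‖ := by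
    intro t ht ht1
    rcases le_total t t₀ with h | h
    · rw [norm_sub_rev, abs_of_nonpos (sub_nonpos.2 h), neg_sub]
      exact hest t t₀ ht ht1 h
    · rw [abs_of_nonneg (sub_nonneg.2 h)]
      exact hest t₀ t ht₀ (by linarith) h
  have hab : Tendsto (fun t : ℝ => |t - t₀|) (𝓝[Set.Ici 0] t₀) (𝓝[≥] 0) := by
    refine tendsto_nhdsWithin_iff.2 ⟨?_, Eventually.of_forall fun t => Set.mem_Ici.2 (abs_nonneg _)⟩
    have : Continuous fun t : ℝ => |t - t₀| := by fun_prop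
    have := this.tendsto t₀
    simp only [sub_self, abs_zero] at this
    exact this.mono_left nhdsWithin_le_nhds
  have hz : Tendsto (fun t : ℝ => M * ‖L |t - t₀| f - f‖) (𝓝[Set.Ici 0] t₀) (𝓝 0) := by
    have := ((((hc0 f).comp hab).sub_const f).norm).const_mul M
    simpa using this
  have hfin : Tendsto (fun t => L t f - L t₀ f) (𝓝[Set.Ici 0] t₀) (𝓝 0) := by
    refine squeeze_zero_norm' ?_ hz
    filter_upwards [self_mem_nhdsWithin,
      nhdsWithin_le_nhds (Iic_mem_nhds (show t₀ < t₀ + 1 by linarith))] with t h1 h2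
    exact hest2 t h1 h2
  exact tendsto_sub_nhds_zero_iff.1 hfin

lemma bridge {T D : ℝ → Lp ℝ p μ →L[ℝ] Lp ℝ p μ} {W : Ω → ℝ} {K : Lp ℝ p μ →L[ℝ] Lp ℝ p μ}
    (hK : ∀ f, K f =ᵐ[μ] fun ω => W ω * f ω) (h : IsPerturbedSG μ p T D W) : IsPert T D (-K) := by
  refine ⟨h.1, fun f g => (h.2 f g).trans ⟨?_, ?_⟩⟩
  · rintro ⟨g₀, h1, h2⟩
    have : g - (-K) f = g₀ := by
      apply Lp.ext
      have e : g - (-K) f = g + K f := by simp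
      rw [e]
      filter_upwards [Lp.coeFn_add g (K f), hK f, h2] with ω a b c
      rw [a, Pi.add_apply, b, c]; ring
    rwa [this]
  · intro h1
    refine ⟨_, h1, ?_⟩
    have e : g - (-K) f = g + K f := by simp
    rw [e]
    filter_upwards [Lp.coeFn_add g (K f), hK f] with ω a b
    rw [a, Pi.add_apply, b]; ring

lemma bridgeSub {F : Submodule ℝ (Lp ℝ p μ)} {T D : ℝ → F →L[ℝ] F} {W : Ω → ℝ}
    {K : Lp ℝ p μ →L[ℝ] Lp ℝ p μ} {KF : F →L[ℝ] F}
    (hK : ∀ f, K f =ᵐ[μ] fun ω => W ω * f ω) (hKF : ∀ f : F, ((KF f : F) : Lp ℝ p μ) = K f)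
    (h : IsPert T D KF) : IsPerturbedSGSub μ p F T D (fun ω => -(W ω)) := by
  refine ⟨h.1, fun f g => (h.2 f g).trans ⟨?_, ?_⟩⟩
  · intro h1
    refine ⟨_, h1, ?_⟩
    rw [Submodule.coe_sub, hKF]
    filter_upwards [Lp.coeFn_sub (g : Lp ℝ p μ) (K f), hK f] with ω a b
    rw [a, Pi.sub_apply, b]; ring
  · rintro ⟨g₀, h1, h2⟩
    have : g - KF f = g₀ := by
      apply Subtype.ext
      rw [Submodule.coe_sub, hKF]
      apply Lp.ext
      filter_upwards [Lp.coeFn_sub (g : Lp ℝ p μ) (K f), hK f, h2] with ω a b c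
      rw [a, Pi.sub_apply, b, c]; ring
    rwa [this]

lemma mult_pos {W : Ω → ℝ} {c : ℝ} {K : Lp ℝ p μ →L[ℝ] Lp ℝ p μ}
    (hK : ∀ f, K f =ᵐ[μ] fun ω => W ω * f ω) (h0 : ∀ ω, 0 ≤ W ω) (h1 : ∀ ω, W ω ≤ c)
    (f : Lp ℝ p μ) (hf : 0 ≤ f) : 0 ≤ K f ∧ K f ≤ c • f := by
  rw [← Lp.coeFn_nonneg] at hf
  refine ⟨?_, ?_⟩
  · rw [← Lp.coeFn_nonneg]
    filter_upwards [hf, hK f] with ω a b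
    rw [b]
    exact mul_nonneg (h0 ω) a
  · rw [← Lp.coeFn_le]
    filter_upwards [hf, hK f, Lp.coeFn_smul c f] with ω a b d
    rw [b, d]
    exact mul_le_mul_of_nonneg_right (h1 ω) a

lemma mult_sub {W W' : Ω → ℝ} {K K' : Lp ℝ p μ →L[ℝ] Lp ℝ p μ}
    (hK : ∀ f, K f =ᵐ[μ] fun ω => W ω * f ω) (hK' : ∀ f, K' f =ᵐ[μ] fun ω => W' ω * f ω)
    (f : Lp ℝ p μ) : (K - K') f =ᵐ[μ] fun ω => (W ω - W' ω) * f ω := by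
  have e : (K - K') f = K f - K' f := rfl
  rw [e]
  filter_upwards [Lp.coeFn_sub (K f) (K' f), hK f, hK' f] with ω a b c
  rw [a, Pi.sub_apply, b, c]; ring

end Final
end AbsAux

/-- For locally measurable `V : Ω → [0,∞]`, with `P = s-lim_{t→0+} T_V(t)`
a band projection with range the band `F` (identified with `L_p(μ₁)` for a decomposition
`μ = μ₁ + μ₂`, `μ₁ ⊥ μ₂`), the rate `−V` is admissible for the restricted `C₀`-semigroup
`T_V|_F`; this relies on the domination `T_{V∧m − V∧n}(t) ≤ T(t)` for all `m ≥ n ≥ 0`. -/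
theorem statement11
    {Ω : Type*} [MeasurableSpace Ω] (μ : Measure Ω) (p : ℝ≥0∞) [Fact (1 ≤ p)] (hp : p ≠ ∞)
    (T : ℝ → Lp ℝ p μ →L[ℝ] Lp ℝ p μ)
    (hT : IsC0Semigroup T) (hTpos : IsPositiveSG T)
    (V : Ω → ℝ≥0∞) (hVmeas : LocallyMeasurable μ V)
    -- the one-parameter semigroup `T_V = s-lim_{n→∞} e^{t(A − V∧n)}`
    (S : ℕ → ℝ → Lp ℝ p μ →L[ℝ] Lp ℝ p μ)
    (hS : ∀ n : ℕ, IsPerturbedSG μ p T (S n) (trunc V n))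
    (TV : ℝ → Lp ℝ p μ →L[ℝ] Lp ℝ p μ)
    (hTV : ∀ t : ℝ, 0 ≤ t → ∀ f : Lp ℝ p μ,
      Tendsto (fun n : ℕ => S n t f) atTop (𝓝 (TV t f)))
    -- the band projection `P = s-lim_{t→0+} T_V(t)`
    (P : Lp ℝ p μ →L[ℝ] Lp ℝ p μ)
    (hP : ∀ f : Lp ℝ p μ, Tendsto (fun t : ℝ => TV t f) (𝓝[>] (0 : ℝ)) (𝓝 (P f)))
    (hPband : IsBandProjection P)
    -- the band `F = R(P)` (i.e. `L_p(μ₁)`), and the restriction of `T_V` to `F`,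
    -- which is a `C₀`-semigroup
    (F : Submodule ℝ (Lp ℝ p μ)) (hF : (F : Set (Lp ℝ p μ)) = Set.range P)
    (TVr : ℝ → F →L[ℝ] F)
    (hTVr : ∀ t : ℝ, 0 ≤ t → ∀ f : F, ((TVr t f : F) : Lp ℝ p μ) = TV t (f : Lp ℝ p μ))
    (hTVrC0 : IsC0Semigroup TVr) :
    -- the domination `T_{V∧m − V∧n}(t) ≤ T(t)` for `m ≥ n ≥ 0` …
    (∀ m n : ℕ, n ≤ m →
      ∀ D : ℝ → Lp ℝ p μ →L[ℝ] Lp ℝ p μ,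
        IsPerturbedSG μ p T D (fun ω => trunc V m ω - trunc V n ω) →
        ∀ t : ℝ, 0 ≤ t → ∀ f : Lp ℝ p μ, 0 ≤ f → D t f ≤ T t f) ∧
    -- … and `−V` is admissible for `T_V|_F`
    (∃ U : ℕ → ℝ → F →L[ℝ] F,
      (∀ n : ℕ, IsPerturbedSGSub μ p F TVr (U n) (fun ω => -(trunc V n ω))) ∧
      ∃ L : ℝ → F →L[ℝ] F,
        (∀ t : ℝ, 0 ≤ t → ∀ f : F, Tendsto (fun n : ℕ => U n t f) atTop (𝓝 (L t f))) ∧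
        IsC0Semigroup L) := by
  choose B hB using AbsAux.exists_mult hp hVmeas
  have hBd := fun m n => AbsAux.mult_sub (hB m) (hB n)
  have hBdp : ∀ m n, n ≤ m → ∀ f : Lp ℝ p μ, 0 ≤ f →
      0 ≤ (B m - B n) f ∧ (B m - B n) f ≤ (m : ℝ) • f := fun m n hmn =>
    AbsAux.mult_pos (hBd m n) (fun ω => sub_nonneg.2 (AbsAux.trunc_mono V hmn ω))
      (fun ω => (sub_le_self _ (AbsAux.trunc_nonneg V n ω)).trans (AbsAux.trunc_le V m ω))
  have hBp : ∀ m, ∀ f : Lp ℝ p μ, 0 ≤ f → 0 ≤ B m f ∧ B m f ≤ (m : ℝ) • f := fun m =>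
    AbsAux.mult_pos (hB m) (AbsAux.trunc_nonneg V m) (AbsAux.trunc_le V m)
  refine ⟨fun m n hmn D hD t ht f hf =>
    (AbsAux.absorb hT hTpos (hBdp m n hmn) (AbsAux.bridge (hBd m n) hD) ht hf).2, ?_⟩
  have hmem : ∀ f, f ∈ F ↔ P f = f := by
    intro f
    rw [← SetLike.mem_coe, hF]
    constructor
    · rintro ⟨g, rfl⟩
      exact DFunLike.congr_fun hPband.1 g
    · intro h
      exact ⟨f, h⟩
  have hFc : IsClosed (F : Set (Lp ℝ p μ)) := by
    have : (F : Set (Lp ℝ p μ)) = {f | P f = f} := Set.ext hmem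
    rw [this]
    exact isClosed_eq P.continuous continuous_id
  haveI : CompleteSpace F := hFc.completeSpace_coe
  have hFp : ∀ f ∈ F, f ⊔ 0 ∈ F := fun f hf =>
    (hmem _).2 (AbsAux.band_pos hPband ((hmem f).1 hf))
  have hBF : ∀ n, ∀ f ∈ F, B n f ∈ F := by
    intro n
    have h1 : ∀ f ∈ F, 0 ≤ f → B n f ∈ F := fun f hf h0 =>
      (hmem _).2 (AbsAux.band_ideal hPband ((hmem f).1 hf) (hBp n f h0).1 (hBp n f h0).2)
    intro f hf
    have e : f ⊔ 0 - (-f) ⊔ 0 = f := posPart_sub_negPart f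
    rw [← e, map_sub]
    exact F.sub_mem (h1 _ (hFp f hf) le_sup_right)
      (h1 _ (hFp _ (F.neg_mem hf)) le_sup_right)
  let BF : ℕ → F →L[ℝ] F := fun n =>
    ((B n).comp F.subtypeL).codRestrict F (fun f => hBF n f f.2)
  have hBFc : ∀ n (f : F), ((BF n f : F) : Lp ℝ p μ) = B n f := fun n f => rfl
  choose U hU hUv using fun n => AbsAux.pert_exists hTVrC0 (BF n)
  refine ⟨U, fun n => AbsAux.bridgeSub (hB n) (hBFc n) (hU n), ?_⟩
  have hSp : ∀ m, AbsAux.IsPert T (S m) (-B m) := fun m => AbsAux.bridge (hB m) (hS m)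
  have hSd : ∀ m t, 0 ≤ t → ∀ f, 0 ≤ f → 0 ≤ S m t f ∧ S m t f ≤ T t f :=
    fun m t ht f hf => AbsAux.absorb hT hTpos (hBp m) (hSp m) ht hf
  choose D hD hDv using fun m n => AbsAux.pert_exists (hS m).1 (B n)
  have hDT : ∀ m n, AbsAux.IsPert T (D m n) (-(B m - B n)) := by
    intro m n
    have := (hSp m).trans (hD m n)
    rwa [show -B m + B n = -(B m - B n) by abel] at this
  have hDd : ∀ m n, n ≤ m → ∀ t, 0 ≤ t → ∀ f, 0 ≤ f → 0 ≤ D m n t f ∧ D m n t f ≤ T t f :=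
    fun m n hmn t ht f hf => AbsAux.absorb hT hTpos (hBdp m n hmn) (hDT m n) ht hf
  have hDl : ∀ m n t, 0 ≤ t → ∀ f, 0 ≤ f → S m t f ≤ D m n t f := fun m n t ht f hf =>
    (AbsAux.pos_pert (hS m).1 (fun t ht f hf => (hSd m t ht f hf).1)
      (fun f hf => (hBp n f hf).1) (hD m n) ht hf).2
  have hDm : ∀ m n, n ≤ m → ∀ t, 0 ≤ t → ∀ f, 0 ≤ f → D m n t f ≤ D m (n + 1) t f := by
    intro m n hmn t ht f hf
    have h1 := ((hD m n).symm (hS m).1).trans (hD m (n + 1))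
    rw [show -B n + B (n + 1) = B (n + 1) - B n by abel] at h1
    exact (AbsAux.pos_pert (hD m n).1 (fun t ht f hf => (hDd m n hmn t ht f hf).1)
      (fun f hf => (hBdp (n + 1) n (Nat.le_succ n) f hf).1) h1 ht hf).2
  have hbd : ∀ τ : ℝ, ∃ M, 0 ≤ M ∧ ∀ m t, 0 ≤ t → t ≤ τ → ‖S m t‖ ≤ M := by
    intro τ
    obtain ⟨M, hM0, hM⟩ := AbsAux.C0_bound hT τ
    refine ⟨M, hM0, fun m t ht htτ => ?_⟩
    refine le_trans ?_ (hM t ht htτ)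
    exact ContinuousLinearMap.opNorm_le_bound _ (norm_nonneg _)
      (AbsAux.opNorm_le_of_dom (hSd m t ht))
  have hlim : ∀ t, 0 ≤ t → ∀ f : F,
      Tendsto (fun m => S m t f) atTop (𝓝 ((TVr t f : F) : Lp ℝ p μ)) := by
    intro t ht f
    rw [hTVr t ht f]
    exact hTV t ht f
  have hconv : ∀ n t, 0 ≤ t → ∀ f : F,
      Tendsto (fun m => D m n t f) atTop (𝓝 ((U n t f : F) : Lp ℝ p μ)) := fun n t ht f =>
    AbsAux.pert_conv F (fun m => (hS m).1) (fun m => (hD m n).1) (fun m => hDv m n) hTVrC0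
      (hU n).1 (hUv n) (hBFc n) hbd hlim t ht f
  refine AbsAux.lim_sg hp hT F hFc hFp hTVrC0 (fun n => (hU n).1) ?_ ?_ ?_ ?_
  · intro n t ht f hf
    exact le_of_tendsto_of_tendsto' (hlim t ht f) (hconv n t ht f) fun m => hDl m n t ht f hf
  · intro n t ht f hf
    refine le_of_tendsto_of_tendsto (hconv n t ht f) (hconv (n + 1) t ht f) ?_
    filter_upwards [eventually_ge_atTop n] with m hm
    exact hDm m n hm t ht f hf
  · intro n t ht f hf
    refine le_of_tendsto (hconv n t ht f) ?_
    filter_upwards [eventually_ge_atTop n] with m hm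
    exact (hDd m n hm t ht f hf).2
  · intro n t ht f
    refine le_of_tendsto (hconv n t ht f).norm ?_
    filter_upwards [eventually_ge_atTop n] with m hm
    exact AbsAux.opNorm_le_of_dom (hDd m n hm t ht) f
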